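/- arXiv:2006.10324 — 11 statements merged into one kernel-verified Lean document; each statement's English description precedes it below -/
import Mathlib

section
/- Let F be a field of characteristic different from 2, V an F-vector space of dimension n ≥ 3, and X : V^{n−1} → V an alternating multilinear map which is an (n−1)-fold cross product relative to both nondegenerate symmetric bilinear forms b and b' on V. Then there exists a scalar μ ∈ F with μ^{n−2} = 1 such that b' = μ·b. In particular, if n = 3 then b' = b. -/
/-!
For `v : Fin m → V` with `dim V = m + 1`, the map `(v, w) ↦ b (X v) w` is an alternating
form of top degree, because `X` is alternating and `X v` is orthogonal to every `v i`.
The space of top-degree forms is one-dimensional, so the forms obtained from `b` and `b'` are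
proportional: `b' (X v) w = μ * b (X v) w`. On a `b`-orthogonal basis `e`, omitting `e i` and
applying `X` gives a nonzero multiple of `e i`, so the values of `X` span `V` and `b' = μ • b`.
Comparing the two Gram determinant identities at a value `X v` with nonzero norm gives
`μ ^ m = μ`, and `μ ≠ 0` since `b'` is nondegenerate.
-/

/-- An `r`-fold cross product on `V` relative to the bilinear form `b`. -/
def IsCrossProduct {F V : Type*} [Field F] [AddCommGroup V] [Module F V] {r : ℕ}
    (b : LinearMap.BilinForm F V) (X : MultilinearMap F (fun _ : Fin r => V) V) : Prop :=
  (∀ v : Fin r → V, ∀ i : Fin r, b (X v) (v i) = 0) ∧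
  (∀ v : Fin r → V, b (X v) (X v) = (Matrix.of fun i j : Fin r => b (v i) (v j)).det)

/-- The top-degree alternating form `(v, w) ↦ b (X v) w` attached to a cross product, with `w`
placed in the last argument. -/
def crossForm {F V : Type*} [Field F] [AddCommGroup V] [Module F V] {m : ℕ}
    (b : LinearMap.BilinForm F V) (X : MultilinearMap F (fun _ : Fin m => V) V)
    (halt : ∀ (v : Fin m → V) (i j : Fin m), i ≠ j → v i = v j → X v = 0)
    (h : IsCrossProduct b X) : V [⋀^Fin (m + 1)]→ₗ[F] F :=
  { MultilinearMap.uncurryRight (M := fun _ : Fin (m + 1) => V) (b.compMultilinearMap X) with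
    map_eq_zero_of_eq' := by
      intro v i j hv hij
      change b (X (Fin.init v)) (v (Fin.last m)) = 0
      induction i using Fin.lastCases with
      | last =>
        induction j using Fin.lastCases with
        | last => exact absurd rfl hij
        | cast j => rw [hv]; exact h.1 (Fin.init v) j
      | cast i =>
        induction j using Fin.lastCases with
        | last => rw [← hv]; exact h.1 (Fin.init v) i
        | cast j =>
          have hne : i ≠ j := fun hh => hij (by rw [hh])
          rw [halt (Fin.init v) i j hne hv]
          simp }

lemma crossForm_snoc {F V : Type*} [Field F] [AddCommGroup V] [Module F V] {m : ℕ}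
    (b : LinearMap.BilinForm F V) (X : MultilinearMap F (fun _ : Fin m => V) V)
    (halt : ∀ (v : Fin m → V) (i j : Fin m), i ≠ j → v i = v j → X v = 0)
    (h : IsCrossProduct b X) (v : Fin m → V) (w : V) :
    crossForm b X halt h (Fin.snoc (α := fun _ => V) v w) = b (X v) w := by
  change b (X (Fin.init (Fin.snoc (α := fun _ => V) v w)))
    (Fin.snoc (α := fun _ => V) v w (Fin.last m)) = _
  rw [Fin.init_snoc, Fin.snoc_last]

/-- The proportionality statement with the arity `m` of `X` as parameter, so that
`dim V = m + 1`. -/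
lemma exists_smul_of_isCrossProduct {F V : Type*} [Field F] [AddCommGroup V] [Module F V]
    [FiniteDimensional F V] (hchar : (2 : F) ≠ 0)
    (m : ℕ) (hdim : Module.finrank F V = m + 1)
    (b b' : LinearMap.BilinForm F V)
    (hbnd : b.Nondegenerate) (hbsymm : ∀ u v : V, b u v = b v u)
    (hb'nd : b'.Nondegenerate)
    (X : MultilinearMap F (fun _ : Fin m => V) V)
    (halt : ∀ (v : Fin m → V) (i j : Fin m), i ≠ j → v i = v j → X v = 0)
    (hXb : IsCrossProduct b X) (hXb' : IsCrossProduct b' X) :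
    ∃ μ : F, μ ≠ 0 ∧ μ ^ m = μ ∧ b' = μ • b := by
  have : Invertible (2 : F) := invertibleOfNonzero hchar
  obtain ⟨e0, he0⟩ := LinearMap.BilinForm.exists_orthogonal_basis (B := b) ⟨hbsymm⟩
  let e : Module.Basis (Fin (m + 1)) F V := e0.reindex (finCongr hdim)
  have hort : ∀ i j, i ≠ j → b (e i) (e j) = 0 := by
    intro i j hij
    have := he0 (i := (finCongr hdim).symm i) (j := (finCongr hdim).symm j) (by simpa using hij)
    simpa [e] using this
  have hcoord : ∀ y j, b y (e j) = e.repr y j * b (e j) (e j) := by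
    intro y j
    conv_lhs => rw [← e.sum_repr y]
    rw [map_sum, LinearMap.sum_apply, Finset.sum_eq_single j]
    · simp
    · intro k _ hk
      simp [hort k j hk]
    · simp
  have hd : ∀ i, b (e i) (e i) ≠ 0 := by
    intro i hi
    refine e.ne_zero i (hbnd.1 (e i) fun y => ?_)
    rw [hbsymm, hcoord, hi, mul_zero]
  let v : Fin (m + 1) → Fin m → V := fun i k => e (i.succAbove k)
  have hnorm : ∀ i, b (X (v i)) (X (v i)) ≠ 0 := by
    intro i
    have hdiag : (Matrix.of fun k l : Fin m => b (v i k) (v i l)) =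
        Matrix.diagonal fun k => b (v i k) (v i k) := by
      ext k l
      by_cases hkl : k = l
      · subst hkl; simp
      · rw [Matrix.diagonal_apply_ne _ hkl]
        exact hort _ _ fun hh => hkl (Fin.succAbove_right_injective hh)
    rw [hXb.2, hdiag, Matrix.det_diagonal]
    exact Finset.prod_ne_zero_iff.2 fun k _ => hd _
  have hX : ∀ i, X (v i) = e.repr (X (v i)) i • e i := by
    intro i
    conv_lhs => rw [← e.sum_repr (X (v i))]
    refine Finset.sum_eq_single i (fun k _ hk => ?_) (by simp)
    obtain ⟨l, rfl⟩ := Fin.exists_succAbove_eq hk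
    have h0 : b (X (v i)) (e (i.succAbove l)) = 0 := hXb.1 (v i) l
    rw [hcoord] at h0
    rw [(mul_eq_zero.1 h0).resolve_right (hd _), zero_smul]
  have hc : ∀ i, e.repr (X (v i)) i ≠ 0 := by
    intro i hi
    apply hnorm i
    rw [hX i, hi]
    simp
  let Φ := crossForm b X halt hXb
  let Φ' := crossForm b' X halt hXb'
  have hΦ : Φ e ≠ 0 := by
    intro h0
    -- If the form vanished on one basis it would vanish identically.
    have h1 : Φ = 0 := by rw [Φ.eq_smul_basis_det e, h0, zero_smul]
    have h2 := crossForm_snoc b X halt hXb (v 0) (X (v 0))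
    change Φ _ = _ at h2
    rw [h1] at h2
    exact hnorm 0 h2.symm
  have hprop : Φ' = (Φ' e / Φ e) • Φ := by
    conv_lhs => rw [Φ'.eq_smul_basis_det e]
    conv_rhs => rw [Φ.eq_smul_basis_det e]
    rw [smul_smul]
    congr 1
    rw [AlternatingMap.smul_apply, e.det_self, smul_eq_mul, mul_one, div_mul_cancel₀ _ hΦ]
  generalize Φ' e / Φ e = μ at hprop
  have hval : ∀ u w, b' (X u) w = μ * b (X u) w := by
    intro u w
    rw [← crossForm_snoc b' X halt hXb', ← crossForm_snoc b X halt hXb]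
    change Φ' _ = _
    rw [hprop]
    rfl
  have hb' : b' = μ • b := by
    refine e.ext fun i => LinearMap.ext fun w => ?_
    have h := hval (v i) w
    rw [hX i] at h
    simp only [map_smul, LinearMap.smul_apply, smul_eq_mul] at h ⊢
    refine mul_left_cancel₀ (hc i) ?_
    rw [h]; ring
  have hμ : μ ≠ 0 := by
    rintro rfl
    refine e.ne_zero 0 (hb'nd.1 (e 0) fun y => ?_)
    simp [hb']
  refine ⟨μ, hμ, ?_, hb'⟩
  have h := hXb'.2 (v 0)
  have hG : (Matrix.of fun k l : Fin m => b' (v 0 k) (v 0 l)) =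
      μ • Matrix.of fun k l : Fin m => b (v 0 k) (v 0 l) := by
    ext k l
    simp [hb']
  rw [hG, Matrix.det_smul, ← hXb.2, hval, Fintype.card_fin] at h
  exact (mul_right_cancel₀ (hnorm 0) h).symm

/-- an alternating `(n-1)`-fold cross product relative to two
nondegenerate symmetric bilinear forms `b`, `b'` forces `b' = μ • b` with `μ^(n-2) = 1`;
in particular for `n = 3`, `b' = b`. -/
theorem stmt3 (F V : Type*) [Field F] [AddCommGroup V] [Module F V] [FiniteDimensional F V]
    (hchar : (2 : F) ≠ 0)
    (n : ℕ) (hn : 3 ≤ n) (hdim : Module.finrank F V = n)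
    (b b' : LinearMap.BilinForm F V)
    (hbnd : b.Nondegenerate) (hbsymm : ∀ u v : V, b u v = b v u)
    (hb'nd : b'.Nondegenerate) (hb'symm : ∀ u v : V, b' u v = b' v u)
    (X : MultilinearMap F (fun _ : Fin (n - 1) => V) V)
    (halt : ∀ (v : Fin (n - 1) → V) (i j : Fin (n - 1)), i ≠ j → v i = v j → X v = 0)
    (hXb : IsCrossProduct b X) (hXb' : IsCrossProduct b' X) :
    (∃ μ : F, μ ^ (n - 2) = 1 ∧ b' = μ • b) ∧ (n = 3 → b' = b) := by
  obtain ⟨k, rfl⟩ : ∃ k, n = k + 3 := ⟨n - 3, by omega⟩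
  obtain ⟨μ, hμ, hpow, hb'⟩ := exists_smul_of_isCrossProduct hchar (k + 2) hdim b b'
    hbnd hbsymm hb'nd X halt hXb hXb'
  have h1 : μ ^ (k + 1) = 1 := by
    refine mul_right_cancel₀ hμ ?_
    rw [← pow_succ, hpow, one_mul]
  refine ⟨⟨μ, h1, hb'⟩, fun hk => ?_⟩
  obtain rfl : k = 0 := by omega
  rw [hb', show μ = 1 by simpa using h1, one_smul]
end

section
/- Let F be a field of characteristic different from 2, V an F-vector space of dimension 8, and X : V³ → V an alternating multilinear map which is a 3-fold cross product relative to both nondegenerate symmetric bilinear forms b and b' on V. Then either b' = b or b' = −b. -/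
section

variable {F V : Type*} [Field F] [AddCommGroup V] [Module F V]

/-- `X(a, c, ·)` squares to `-D(a, c)` modulo `span {a, c}`, with `D(a, c)` the Gram determinant. -/
lemma apply_apply_eq (hchar : (2 : F) ≠ 0) (b : LinearMap.BilinForm F V)
    (hbnd : b.Nondegenerate) (hbsymm : ∀ u v : V, b u v = b v u)
    (X : MultilinearMap F (fun _ : Fin 3 => V) V) (hX : IsCrossProduct b X) (a c x : V) :
    ∃ α β : F, X ![a, c, X ![a, c, x]] =
      -(b a a * b c c - b a c * b a c) • x + α • a + β • c := by
  obtain ⟨h1, h2⟩ := hX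
  have hadd : ∀ x y, X ![a, c, x + y] = X ![a, c, x] + X ![a, c, y] := by
    intro x y
    have h := X.map_update_add ![a, c, 0] 2 x y
    have hu : ∀ z : V, Function.update ![a, c, 0] 2 z = ![a, c, z] := by
      intro z
      ext i
      fin_cases i <;> simp [Function.update]
    simpa only [hu] using h
  have hdiag : ∀ x, b (X ![a, c, x]) x = 0 := fun x => by simpa using h1 ![a, c, x] 2
  have hskew : ∀ x y, b (X ![a, c, x]) y = - b (X ![a, c, y]) x := by
    intro x y
    have h := hdiag (x + y)
    simp only [hadd, map_add, LinearMap.add_apply, hdiag] at h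
    linear_combination h
  have hsq : ∀ x, b (X ![a, c, x]) (X ![a, c, x]) =
      (b a a * b c c - b a c * b a c) * b x x - b a a * b c x * b c x
        + 2 * b a c * b a x * b c x - b c c * b a x * b a x := by
    intro x
    rw [h2, Matrix.det_fin_three]
    simp [hbsymm c a, hbsymm x a, hbsymm x c]
    ring
  have hpol : ∀ x y, b (X ![a, c, x]) (X ![a, c, y]) =
      (b a a * b c c - b a c * b a c) * b x y - b a a * b c x * b c y
        + b a c * (b a x * b c y + b a y * b c x) - b c c * b a x * b a y := by
    intro x y
    have h := hsq (x + y)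
    simp only [hadd, map_add, LinearMap.add_apply] at h
    rw [hbsymm (X ![a, c, y]), hbsymm y x] at h
    apply mul_left_cancel₀ hchar
    linear_combination h - hsq x - hsq y
  refine ⟨b c c * b a x - b a c * b c x, b a a * b c x - b a c * b a x, ?_⟩
  refine sub_eq_zero.1 (hbnd.1 _ fun y => ?_)
  have h := hskew (X ![a, c, x]) y
  rw [hbsymm (X ![a, c, y]), hpol] at h
  simp only [map_sub, map_add, map_smul, LinearMap.sub_apply, LinearMap.add_apply,
    LinearMap.smul_apply, smul_eq_mul, h]
  ring

lemma gram_eq [FiniteDimensional F V] (hchar : (2 : F) ≠ 0) (hdim : 2 < Module.finrank F V)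
    (b b' : LinearMap.BilinForm F V)
    (hbnd : b.Nondegenerate) (hbsymm : ∀ u v : V, b u v = b v u)
    (hb'nd : b'.Nondegenerate) (hb'symm : ∀ u v : V, b' u v = b' v u)
    (X : MultilinearMap F (fun _ : Fin 3 => V) V)
    (hXb : IsCrossProduct b X) (hXb' : IsCrossProduct b' X) (a c : V) :
    b' a a * b' c c - b' a c * b' a c = b a a * b c c - b a c * b a c := by
  classical
  by_contra hne
  have htop : Submodule.span F (({a, c} : Finset V) : Set V) = ⊤ := by
    rw [eq_top_iff]
    intro x _
    obtain ⟨α, β, h⟩ := apply_apply_eq hchar b hbnd hbsymm X hXb a c x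
    obtain ⟨α', β', h'⟩ := apply_apply_eq hchar b' hb'nd hb'symm X hXb' a c x
    rw [h] at h'
    have hmem : ((b' a a * b' c c - b' a c * b' a c) - (b a a * b c c - b a c * b a c)) • x ∈
        Submodule.span F (({a, c} : Finset V) : Set V) := by
      rw [Finset.coe_pair, Submodule.mem_span_pair]
      refine ⟨α' - α, β' - β, ?_⟩
      linear_combination (norm := module) (-1 : F) • h'
    exact (Submodule.smul_mem_iff _ (sub_ne_zero.2 hne)).1 hmem
  have h1 := finrank_span_finset_le_card (R := F) ({a, c} : Finset V)
  rw [Set.finrank, htop, finrank_top] at h1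
  have h2 := Finset.card_le_two (a := a) (b := c)
  omega

/-- In dimension 8, a nondegenerate symmetric form is determined up to sign by its `2 × 2` Gram
determinants. -/
lemma eq_or_eq_neg_of_gram_eq [FiniteDimensional F V] (hchar : (2 : F) ≠ 0)
    (hdim : Module.finrank F V = 8) (b b' : LinearMap.BilinForm F V)
    (hbnd : b.Nondegenerate) (hbsymm : ∀ u v : V, b u v = b v u)
    (hb'nd : b'.Nondegenerate) (hb'symm : ∀ u v : V, b' u v = b' v u)
    (hD : ∀ a c, b' a a * b' c c - b' a c * b' a c = b a a * b c c - b a c * b a c) :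
    b' = b ∨ b' = -b := by
  have hP : ∀ a c d, b' a a * b' c d - b' a c * b' a d = b a a * b c d - b a c * b a d := by
    intro a c d
    have h := hD a (c + d)
    simp only [map_add, LinearMap.add_apply] at h
    rw [hbsymm d c, hb'symm d c] at h
    apply mul_left_cancel₀ hchar
    linear_combination h - hD a c - hD a d
  have hpolar : ∀ (B : LinearMap.BilinForm F V), (∀ u v, B u v = B v u) → ∀ S : Submodule F V,
      (∀ x ∈ S, B x x = 0) → ∀ x ∈ S, ∀ y ∈ S, B x y = 0 := by
    intro B hB S h0 x hx y hy
    have h := h0 (x + y) (S.add_mem hx hy)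
    simp only [map_add, LinearMap.add_apply, h0 x hx, h0 y hy] at h
    rw [hB y x] at h
    apply mul_left_cancel₀ hchar
    linear_combination h
  obtain ⟨a, ha⟩ : ∃ a, b' a a ≠ 0 := by
    by_contra! h0
    have hz := hpolar b' hb'symm ⊤ fun x _ => h0 x
    have : Nontrivial V := Module.nontrivial_of_finrank_pos (R := F) (by omega)
    obtain ⟨v, hv⟩ := exists_ne (0 : V)
    exact hv (hb'nd.1 v fun y => hz v trivial y trivial)
  set W : Submodule F V := LinearMap.ker (b' a) ⊓ LinearMap.ker (b a) with hW
  have hWdim : 6 ≤ Module.finrank F W := by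
    have hker : ∀ f : V →ₗ[F] F, 7 ≤ Module.finrank F (LinearMap.ker f) := by
      intro f
      have h := f.finrank_range_add_finrank_ker
      have h' := (LinearMap.range f).finrank_le
      rw [Module.finrank_self] at h'
      omega
    have h := Submodule.finrank_sup_add_finrank_inf_eq (LinearMap.ker (b' a)) (LinearMap.ker (b a))
    have h1 := hker (b' a)
    have h2 := hker (b a)
    have h3 := (LinearMap.ker (b' a) ⊔ LinearMap.ker (b a)).finrank_le
    rw [← hW] at h
    omega
  obtain ⟨μ, hμ⟩ : ∃ μ, ∀ c ∈ W, ∀ d, b' c d = μ * b c d := by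
    refine ⟨b a a / b' a a, fun c hc d => ?_⟩
    have h := hP a c d
    rw [LinearMap.mem_ker.1 hc.1, LinearMap.mem_ker.1 hc.2] at h
    field_simp
    linear_combination h
  obtain ⟨c, hcW, hc⟩ : ∃ c ∈ W, b c c ≠ 0 := by
    by_contra! h0
    have hz := hpolar b hbsymm W h0
    have hle : W ≤ b.orthogonal W := fun x hx y hy => hz y hy x hx
    have h := LinearMap.BilinForm.finrank_orthogonal hbnd W
    have := Submodule.finrank_mono hle
    omega
  obtain ⟨y, hyW, hy⟩ : ∃ y ∈ W, y ∉ Submodule.span F {c} := by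
    by_contra! h0
    have h1 := Submodule.finrank_mono (show W ≤ Submodule.span F {c} from h0)
    have h2 := finrank_span_le_card (R := F) ({c} : Set V)
    simp at h2
    omega
  have hsq : μ * μ = 1 := by
    by_contra hne
    refine hy (Submodule.mem_span_singleton.2 ⟨b c y / b c c, ?_⟩)
    refine sub_eq_zero.1 (hbnd.1 _ fun d => ?_)
    have h := hP c y d
    rw [hμ c hcW, hμ y hyW, hμ c hcW, hμ c hcW] at h
    simp only [map_sub, map_smul, LinearMap.sub_apply, LinearMap.smul_apply, smul_eq_mul]
    apply mul_left_cancel₀ (mul_ne_zero (sub_ne_zero.2 hne) hc)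
    field_simp
    linear_combination -h
  have hfin : ∀ x d, μ * b' x d = b x d := by
    intro x d
    have h := hP c x d
    rw [hμ c hcW, hμ c hcW, hμ c hcW] at h
    apply mul_left_cancel₀ hc
    linear_combination h + b c x * b c d * hsq
  rcases mul_self_eq_one_iff.1 hsq with rfl | rfl
  · left
    ext x d
    simpa using hfin x d
  · right
    ext x d
    simp [← hfin x d]

end

/-- an alternating 3-fold cross product on an 8-dimensional space relative to
two nondegenerate symmetric bilinear forms `b`, `b'` forces `b' = b` or `b' = -b`. -/
theorem stmt4 (F V : Type*) [Field F] [AddCommGroup V] [Module F V] [FiniteDimensional F V]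
    (hchar : (2 : F) ≠ 0)
    (hdim : Module.finrank F V = 8)
    (b b' : LinearMap.BilinForm F V)
    (hbnd : b.Nondegenerate) (hbsymm : ∀ u v : V, b u v = b v u)
    (hb'nd : b'.Nondegenerate) (hb'symm : ∀ u v : V, b' u v = b' v u)
    (X : MultilinearMap F (fun _ : Fin 3 => V) V)
    (halt : ∀ (v : Fin 3 → V) (i j : Fin 3), i ≠ j → v i = v j → X v = 0)
    (hXb : IsCrossProduct b X) (hXb' : IsCrossProduct b' X) :
    b' = b ∨ b' = -b := by
  exact eq_or_eq_neg_of_gram_eq hchar hdim b b' hbnd hbsymm hb'nd hb'symm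
    (gram_eq hchar (by omega) b b' hbnd hbsymm hb'nd hb'symm X hXb hXb')
end

section
/- Let F be a field of characteristic different from 2, V an F-vector space of dimension 8, and X : V³ → V an alternating 3-fold cross product relative to a nondegenerate symmetric bilinear form b. Then for all x, y, v ∈ V: X(x, y, X(x, y, v)) = (b(x,x)b(y,v) − b(y,x)b(x,v))·y − (b(x,y)b(y,v) − b(y,y)b(x,v))·x − (b(x,x)b(y,y) − b(x,y)b(y,x))·v. Consequently, the linear operator T : v ↦ X(x, y, v) satisfies T³ = −(b(x,x)b(y,y) − b(x,y)²)·T. -/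
section CrossProduct

variable {F V : Type*} [Field F] [AddCommGroup V] [Module F V]

lemma cross_add (X : MultilinearMap F (fun _ : Fin 3 => V) V) (x y v w : V) :
    X ![x, y, v + w] = X ![x, y, v] + X ![x, y, w] := by
  have key : ∀ u : V, Function.update ![x, y, 0] 2 u = ![x, y, u] := by
    intro u
    ext i
    fin_cases i <;> simp [Function.update]
  have h := X.map_update_add ![x, y, 0] 2 v w
  simpa only [key] using h

lemma cross_skew {b : LinearMap.BilinForm F V} {X : MultilinearMap F (fun _ : Fin 3 => V) V}
    (hX : IsCrossProduct b X) (x y v w : V) :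
    b (X ![x, y, v]) w = - b (X ![x, y, w]) v := by
  have h : ∀ u, b (X ![x, y, u]) u = 0 := fun u => hX.1 ![x, y, u] 2
  have hvw := h (v + w)
  simp only [cross_add, map_add, LinearMap.add_apply, h] at hvw
  linear_combination hvw

lemma cross_polar (hchar : (2 : F) ≠ 0) {b : LinearMap.BilinForm F V}
    (hbsymm : ∀ u v : V, b u v = b v u) {X : MultilinearMap F (fun _ : Fin 3 => V) V}
    (hX : IsCrossProduct b X) (x y v w : V) :
    b (X ![x, y, v]) (X ![x, y, w]) =
      (b x x * b y y - b x y * b y x) * b v w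
      - (b x x * b y v - b y x * b x v) * b y w
      + (b x y * b y v - b y y * b x v) * b x w := by
  have h : ∀ u, b (X ![x, y, u]) (X ![x, y, u]) =
      b x x * (b y y * b u u - b y u * b y u) - b x y * (b x y * b u u - b y u * b x u)
        + b x u * (b x y * b y u - b y y * b x u) := by
    intro u
    rw [hX.2, Matrix.det_fin_three]
    simp [hbsymm y x, hbsymm u x, hbsymm u y]
    ring
  have hvw := h (v + w)
  simp only [cross_add, map_add, LinearMap.add_apply, h, hbsymm w v,
    hbsymm (X ![x, y, w]) (X ![x, y, v])] at hvw
  rw [hbsymm y x]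
  apply mul_left_cancel₀ hchar
  linear_combination hvw

lemma cross_cross_apply (hchar : (2 : F) ≠ 0) {b : LinearMap.BilinForm F V} (hbnd : b.Nondegenerate)
    (hbsymm : ∀ u v : V, b u v = b v u) {X : MultilinearMap F (fun _ : Fin 3 => V) V}
    (hX : IsCrossProduct b X) (x y v : V) :
    X ![x, y, X ![x, y, v]] =
      (b x x * b y v - b y x * b x v) • y
      - (b x y * b y v - b y y * b x v) • x
      - (b x x * b y y - b x y * b y x) • v := by
  rw [← sub_eq_zero]
  apply hbnd.1
  intro w
  have h1 := cross_skew hX x y (X ![x, y, v]) w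
  have h2 := cross_polar hchar hbsymm hX x y v w
  rw [hbsymm (X ![x, y, w])] at h1
  simp only [map_sub, map_smul, LinearMap.sub_apply, LinearMap.smul_apply, smul_eq_mul]
  linear_combination h1 - h2

end CrossProduct


/-- for an alternating 3-fold cross product on an 8-dimensional space,
`X(x,y,X(x,y,v))` is given by an explicit formula, and the operator `T : v ↦ X(x,y,v)`
satisfies `T³ = -(b(x,x)b(y,y) - b(x,y)²) • T`. -/
theorem stmt6 (F V : Type*) [Field F] [AddCommGroup V] [Module F V] [FiniteDimensional F V]
    (hchar : (2 : F) ≠ 0)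
    (hdim : Module.finrank F V = 8)
    (b : LinearMap.BilinForm F V)
    (hbnd : b.Nondegenerate) (hbsymm : ∀ u v : V, b u v = b v u)
    (X : MultilinearMap F (fun _ : Fin 3 => V) V)
    (halt : ∀ (v : Fin 3 → V) (i j : Fin 3), i ≠ j → v i = v j → X v = 0)
    (hX : IsCrossProduct b X) :
    (∀ x y v : V,
      X ![x, y, X ![x, y, v]] =
        (b x x * b y v - b y x * b x v) • y
        - (b x y * b y v - b y y * b x v) • x
        - (b x x * b y y - b x y * b y x) • v) ∧
    (∀ x y v : V,
      X ![x, y, X ![x, y, X ![x, y, v]]] =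
        - ((b x x * b y y - (b x y) ^ 2) • X ![x, y, v])) := by
  have main := cross_cross_apply hchar hbnd hbsymm hX
  refine ⟨main, fun x y v => ?_⟩
  have hx : b x (X ![x, y, v]) = 0 := by
    rw [hbsymm]
    exact hX.1 ![x, y, v] 0
  have hy : b y (X ![x, y, v]) = 0 := by
    rw [hbsymm]
    exact hX.1 ![x, y, v] 1
  rw [main x y (X ![x, y, v]), hx, hy, hbsymm y x]
  simp [pow_two]
end

section
/- Let F be a field of characteristic different from 2, V an F-vector space of dimension n ≥ 3, and X : V^{n−1} → V an alternating (n−1)-fold cross product relative to a nondegenerate symmetric bilinear form b. Then an invertible linear map φ : V → V satisfies both φ(X(v₁,…,v_{n−1})) = X(φ(v₁),…,φ(v_{n−1})) for all v₁,…,v_{n−1} ∈ V and b(φ(u), φ(v)) = b(u, v) for all u, v ∈ V, if and only if φ is an isometry of b with det(φ) = 1 (i.e. φ lies in the special orthogonal group of (V, b)). -/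
section CrossVolume

variable {F V : Type*} [Field F] [AddCommGroup V] [Module F V] {m : ℕ}

/-- The alternating form `(v₀, v₁, …, v_m) ↦ b(X(v₁, …, v_m), v₀)` attached to an alternating
`m`-fold cross product `X`. -/
def crossVolume (b : LinearMap.BilinForm F V) (X : MultilinearMap F (fun _ : Fin m => V) V)
    (halt : ∀ (v : Fin m → V) (i j : Fin m), i ≠ j → v i = v j → X v = 0)
    (hX : IsCrossProduct b X) : V [⋀^Fin (m + 1)]→ₗ[F] F where
  toMultilinearMap := LinearMap.uncurryLeft (M := fun _ : Fin (m + 1) => V)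
    { toFun := fun w => (b.flip w).compMultilinearMap X
      map_add' := fun x y => by ext; simp
      map_smul' := fun c x => by ext; simp }
  map_eq_zero_of_eq' := by
    intro v i j hv hij
    change b (X (Fin.tail v)) (v 0) = 0
    cases i using Fin.cases with
    | zero =>
      cases j using Fin.cases with
      | zero => exact absurd rfl hij
      | succ j => rw [hv]; exact hX.1 (Fin.tail v) j
    | succ i =>
      cases j using Fin.cases with
      | zero => rw [← hv]; exact hX.1 (Fin.tail v) i
      | succ j =>
        rw [halt (Fin.tail v) i j (fun h => hij (congrArg Fin.succ h)) hv]
        simp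

variable {b : LinearMap.BilinForm F V} {X : MultilinearMap F (fun _ : Fin m => V) V}

/-- `Ω(φ w, φ v₁, …, φ v_m) = det φ · Ω(w, v₁, …, v_m)`, spelled out in terms of `b` and `X`. -/
theorem crossVolume_map [FiniteDimensional F V]
    (halt : ∀ (v : Fin m → V) (i j : Fin m), i ≠ j → v i = v j → X v = 0)
    (hX : IsCrossProduct b X) (hdim : Module.finrank F V = m + 1)
    (f : V →ₗ[F] V) (v : Fin m → V) (w : V) :
    b (X fun i => f (v i)) (f w) = LinearMap.det f * b (X v) w := by
  have key : ∀ u : Fin (m + 1) → V, crossVolume b X halt hX (f ∘ u)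
      = LinearMap.det f * crossVolume b X halt hX u := by
    intro u
    rw [(crossVolume b X halt hX).eq_smul_basis_det (Module.finBasisOfFinrankEq F V hdim)]
    simp only [AlternatingMap.smul_apply, Module.Basis.det_comp, smul_eq_mul]
    ring
  exact key (Fin.cons w v : Fin (m + 1) → V)

theorem exists_cross_ne_zero [FiniteDimensional F V] (hX : IsCrossProduct b X) (hchar : (2 : F) ≠ 0)
    (hdim : Module.finrank F V = m + 1) (hbnd : b.Nondegenerate)
    (hbsymm : ∀ u v : V, b u v = b v u) : ∃ v : Fin m → V, X v ≠ 0 := by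
  have : Invertible (2 : F) := invertibleOfNonzero hchar
  obtain ⟨e, he⟩ := LinearMap.BilinForm.exists_orthogonal_basis (B := b) ⟨hbsymm⟩
  have hne := he.not_isOrtho_basis_self_of_separatingLeft hbnd.1
  let s : Fin m → Fin (Module.finrank F V) := fun i => Fin.cast hdim.symm i.succ
  have hs : Function.Injective s := fun i j h => by simpa [s] using h
  refine ⟨fun i => e (s i), fun h => ?_⟩
  have hgram : (Matrix.of fun i j : Fin m => b (e (s i)) (e (s j)))
      = Matrix.diagonal fun i => b (e (s i)) (e (s i)) := by
    ext i j
    by_cases hij : i = j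
    · subst hij; simp
    · simpa [hij] using he (hs.ne hij)
  have hdet := hX.2 fun i => e (s i)
  rw [h, hgram, Matrix.det_diagonal] at hdet
  simp only [map_zero] at hdet
  exact Finset.prod_ne_zero_iff.2 (fun i _ => hne (s i)) hdet.symm

end CrossVolume

/-- an invertible linear map `φ` is an automorphism of an alternating
`(n-1)`-fold cross product `(V, X)` preserving `b` if and only if `φ` is an isometry of
`b` with `det φ = 1`. -/
theorem stmt8 (F V : Type*) [Field F] [AddCommGroup V] [Module F V] [FiniteDimensional F V]
    (hchar : (2 : F) ≠ 0)
    (n : ℕ) (hn : 3 ≤ n) (hdim : Module.finrank F V = n)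
    (b : LinearMap.BilinForm F V)
    (hbnd : b.Nondegenerate) (hbsymm : ∀ u v : V, b u v = b v u)
    (X : MultilinearMap F (fun _ : Fin (n - 1) => V) V)
    (halt : ∀ (v : Fin (n - 1) → V) (i j : Fin (n - 1)), i ≠ j → v i = v j → X v = 0)
    (hX : IsCrossProduct b X)
    (φ : V ≃ₗ[F] V) :
    ((∀ v : Fin (n - 1) → V, φ (X v) = X (fun i => φ (v i))) ∧
      (∀ u w : V, b (φ u) (φ w) = b u w)) ↔
    ((∀ u w : V, b (φ u) (φ w) = b u w) ∧ LinearMap.det (φ : V →ₗ[F] V) = 1) := by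
  obtain ⟨m, rfl⟩ : ∃ m, n = m + 1 := ⟨n - 1, by omega⟩
  have hmap : ∀ v w, b (X fun i => φ (v i)) (φ w) = LinearMap.det (φ : V →ₗ[F] V) * b (X v) w :=
    fun v w => crossVolume_map (m := m) halt hX hdim (φ : V →ₗ[F] V) v w
  constructor
  · rintro ⟨hφX, hφb⟩
    refine ⟨hφb, ?_⟩
    obtain ⟨v, hv⟩ := exists_cross_ne_zero (m := m) hX hchar hdim hbnd hbsymm
    obtain ⟨w, hw⟩ : ∃ w, b (X v) w ≠ 0 := by
      by_contra! h
      exact hv (hbnd.1 _ h)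
    have h := hmap v w
    rw [← hφX, hφb] at h
    exact (mul_eq_right₀ hw).1 h.symm
  · rintro ⟨hφb, hdet⟩
    refine ⟨fun v => ?_, hφb⟩
    rw [← sub_eq_zero]
    refine hbnd.1 _ fun w => ?_
    obtain ⟨w, rfl⟩ := φ.surjective w
    rw [map_sub, LinearMap.sub_apply, hφb, hmap, hdet, one_mul, sub_self]
end

section
/- Let F be an algebraically closed field of characteristic different from 2, V an F-vector space of dimension n ≥ 3, and b a nondegenerate symmetric bilinear form on V. Then for every r ∈ F with r^{n−2} = 1 there exists an invertible linear map φ : V → V with det(φ) = r and b(φ(u), φ(v)) = r·b(u, v) for all u, v ∈ V. -/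
/-!
Pick `s` with `s ^ 2 = r` and put `ε = s ^ (n - 2)`, so that `ε ^ 2 = r ^ (n - 2) = 1`. In a basis
orthogonal for `b`, the diagonal map with entries `ε * s, s, …, s` multiplies `b` by `s ^ 2 = r`,
because every entry squares to `r`, and has determinant `ε * s ^ n = ε ^ 2 * s ^ 2 = r`.
-/

/-- over an algebraically closed field, for every `(n-2)`-th root of unity
`r` there is an invertible linear map `φ` with `det φ = r` and
`b(φu, φv) = r·b(u,v)` for all `u, v`. -/
theorem stmt10 (F V : Type*) [Field F] [IsAlgClosed F] [AddCommGroup V] [Module F V]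
    [FiniteDimensional F V]
    (hchar : (2 : F) ≠ 0)
    (n : ℕ) (hn : 3 ≤ n) (hdim : Module.finrank F V = n)
    (b : LinearMap.BilinForm F V)
    (hbnd : b.Nondegenerate) (hbsymm : ∀ u v : V, b u v = b v u)
    (r : F) (hr : r ^ (n - 2) = 1) :
    ∃ φ : V ≃ₗ[F] V,
      LinearMap.det (φ : V →ₗ[F] V) = r ∧
      ∀ u v : V, b (φ u) (φ v) = r * b u v := by
  subst hdim
  obtain ⟨m, hm⟩ : ∃ m, Module.finrank F V = m + 3 := ⟨_, (Nat.sub_add_cancel hn).symm⟩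
  have hr0 : r ≠ 0 := by
    rintro rfl
    rw [zero_pow (by omega)] at hr
    exact zero_ne_one hr
  obtain ⟨s, hs⟩ := IsAlgClosed.exists_pow_nat_eq r (n := 2) (by norm_num)
  haveI := invertibleOfNonzero hchar
  obtain ⟨v₀, hv₀⟩ := LinearMap.BilinForm.exists_orthogonal_basis (B := b) ⟨hbsymm⟩
  obtain ⟨v, hv⟩ : ∃ v : Module.Basis (Fin (m + 3)) F V, b.IsOrthoᵢ v := by
    rw [← hm]
    exact ⟨v₀, hv₀⟩
  rw [hm, show m + 3 - 2 = m + 1 by omega] at hr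
  have hε : (s ^ (m + 1)) ^ 2 = 1 := by rw [← pow_mul, mul_comm, pow_mul, hs, hr]
  let d : Fin (m + 3) → F := Fin.cons (s ^ (m + 1) * s) fun _ => s
  have hd : ∀ i, d i * d i = r := by
    intro i
    refine Fin.cases ?_ (fun j => ?_) i
    · simp only [d, Fin.cons_zero]
      linear_combination s ^ 2 * hε + hs
    · simp only [d, Fin.cons_succ]
      linear_combination hs
  let f : V →ₗ[F] V := Matrix.toLin v v (Matrix.diagonal d)
  have hfv : ∀ i, f (v i) = d i • v i := by
    intro i
    simp [f, Matrix.toLin_self, Matrix.diagonal_apply, ite_smul]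
  have hdet : LinearMap.det f = r := by
    simp only [f, LinearMap.det_toLin, Matrix.det_diagonal, Fin.prod_univ_succ (n := m + 2), d,
      Fin.cons_zero, Fin.cons_succ, Finset.prod_const, Finset.card_univ, Fintype.card_fin]
    linear_combination s ^ 2 * hε + hs
  have hf : b.compl₁₂ f f = r • b := by
    refine v.ext fun i => v.ext fun j => ?_
    by_cases hij : i = j
    · subst hij
      simp [hfv, ← hd i, mul_assoc]
    · have h0 : b (v i) (v j) = 0 := hv hij
      simp [hfv, h0]
  refine ⟨LinearMap.equivOfDetNeZero f (hdet ▸ hr0), hdet, fun x y => ?_⟩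
  exact LinearMap.congr_fun₂ hf x y
end

section
/- Let X be a 1-fold cross product on V relative to b, and define h : V × V → End_F(V) by h(u, v) = b(u, v)·id_V − b(X(u), v)·X. Then: (1) h(X(u), v) = X ∘ h(u, v) for all u, v ∈ V; (2) h(v, u) = b(u, v)·id_V + b(X(u), v)·X for all u, v ∈ V (so h is hermitian with respect to the involution α·id + β·X ↦ α·id − β·X); and (3) an invertible linear map φ : V → V satisfies h(φ(u), φ(v)) = h(u, v) for all u, v ∈ V if and only if φ ∘ X = X ∘ φ and b(φ(u), φ(v)) = b(u, v) for all u, v ∈ V. -/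
/-!
Polarizing the two cross product identities (characteristic different from 2 is used in the
second) shows that `X` is skew-adjoint and orthogonal for `b`; by nondegeneracy `X² = -id`.
Sesquilinearity and hermitian symmetry are then direct computations. The symmetrization
`h(u,v) + h(v,u) = 2 b(u,v) id` recovers `b` from `h`, and the remaining part recovers
`b(X u, v)`. So a map preserving `h` is an isometry of `b` preserving `b(X u, v)`, and
nondegeneracy turns this into commutation with `X`.
-/

/-- A 1-fold cross product on `V` relative to `b`, viewed as a linear endomorphism. -/
def IsOneFoldCrossProduct {F V : Type*} [Field F] [AddCommGroup V] [Module F V]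
    (b : LinearMap.BilinForm F V) (X : V →ₗ[F] V) : Prop :=
  (∀ v : V, b (X v) v = 0) ∧ (∀ v : V, b (X v) (X v) = b v v)

/-- The hermitian form `h(u,v) = b(u,v)·id − b(X(u),v)·X` with values in `End_F(V)`
(in fact in the étale subalgebra `F·id ⊕ F·X`). -/
noncomputable def hermForm {F V : Type*} [Field F] [AddCommGroup V] [Module F V]
    (b : LinearMap.BilinForm F V) (X : V →ₗ[F] V) (u v : V) : V →ₗ[F] V :=
  b u v • LinearMap.id - b (X u) v • X

section CrossProduct

variable {F V : Type*} [Field F] [AddCommGroup V] [Module F V]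
  {b : LinearMap.BilinForm F V} {X : V →ₗ[F] V}

lemma IsOneFoldCrossProduct.skew (hX : IsOneFoldCrossProduct b X) (u v : V) :
    b (X v) u = -b (X u) v := by
  have h := hX.1 (u + v)
  simp only [map_add, LinearMap.add_apply, hX.1] at h
  linear_combination h

lemma IsOneFoldCrossProduct.isometry (hX : IsOneFoldCrossProduct b X) (hchar : (2 : F) ≠ 0)
    (hbsymm : ∀ u v : V, b u v = b v u) (u v : V) : b (X u) (X v) = b u v := by
  have h := hX.2 (u + v)
  simp only [map_add, LinearMap.add_apply, hX.2] at h
  rw [hbsymm (X v) (X u), hbsymm v u] at h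
  apply mul_left_cancel₀ hchar
  linear_combination h

lemma eq_of_bilin_eq (hbnd : b.Nondegenerate) {x y : V} (h : ∀ v, b x v = b y v) : x = y := by
  rw [← sub_eq_zero]
  refine hbnd.1 _ fun v => ?_
  simp [h v]

lemma IsOneFoldCrossProduct.apply_apply (hX : IsOneFoldCrossProduct b X) (hchar : (2 : F) ≠ 0)
    (hbnd : b.Nondegenerate) (hbsymm : ∀ u v : V, b u v = b v u) (u : V) : X (X u) = -u := by
  refine eq_of_bilin_eq hbnd fun v => ?_
  rw [hX.skew v (X u), hX.isometry hchar hbsymm, hbsymm v u]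
  simp

end CrossProduct

/-- the form `h(u,v) = b(u,v)·id − b(X(u),v)·X` is `X`-sesquilinear and
hermitian, and an invertible linear map preserves `h` iff it commutes with `X` and is an
isometry of `b`. -/
theorem stmt12 (F V : Type*) [Field F] [AddCommGroup V] [Module F V] [FiniteDimensional F V]
    (hchar : (2 : F) ≠ 0)
    (b : LinearMap.BilinForm F V)
    (hbnd : b.Nondegenerate) (hbsymm : ∀ u v : V, b u v = b v u)
    (X : V →ₗ[F] V) (hX : IsOneFoldCrossProduct b X) :
    (∀ u v : V, hermForm b X (X u) v = X ∘ₗ hermForm b X u v) ∧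
    (∀ u v : V, hermForm b X v u = b u v • LinearMap.id + b (X u) v • X) ∧
    (∀ φ : V ≃ₗ[F] V,
      (∀ u v : V, hermForm b X (φ u) (φ v) = hermForm b X u v) ↔
      ((∀ w : V, φ (X w) = X (φ w)) ∧ ∀ u v : V, b (φ u) (φ v) = b u v)) := by
  have hXX := hX.apply_apply hchar hbnd hbsymm
  have hherm : ∀ u v : V, hermForm b X v u = b u v • LinearMap.id + b (X u) v • X := by
    intro u v
    rw [hermForm, hX.skew u v, hbsymm v u, neg_smul, sub_neg_eq_add]
  refine ⟨fun u v => ?_, hherm, fun φ => ⟨fun h => ?_, fun ⟨hc, hb⟩ u v => ?_⟩⟩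
  · ext w
    simp [hermForm, hXX]
    abel
  · have hb : ∀ u v : V, b (φ u) (φ v) = b u v := by
      intro u v
      by_cases hu : u = 0
      · simp [hu]
      have h1 := LinearMap.congr_fun (h u v) u
      have h2 := LinearMap.congr_fun (h v u) u
      rw [hherm, hherm] at h2
      simp only [hermForm, LinearMap.sub_apply, LinearMap.add_apply, LinearMap.smul_apply,
        LinearMap.id_apply] at h1 h2
      -- the `X`-parts cancel in `h(u,v) + h(v,u)`
      have h3 : (2 * b (φ u) (φ v)) • u = (2 * b u v) • u := by
        linear_combination (norm := module) h1 + h2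
      exact mul_left_cancel₀ hchar (smul_left_injective F hu h3)
    refine ⟨fun u => eq_of_bilin_eq hbnd fun v' => ?_, hb⟩
    obtain ⟨v, rfl⟩ := φ.surjective v'
    rw [hb]
    by_cases hu : u = 0
    · simp [hu]
    -- evaluating at `X u` turns the `X`-part into a multiple of `u`, because `X (X u) = -u`
    have h1 := LinearMap.congr_fun (h u v) (X u)
    simp only [hermForm, LinearMap.sub_apply, LinearMap.smul_apply, hb, sub_right_inj, hXX] at h1
    exact (smul_left_injective F (neg_ne_zero.mpr hu) h1).symm
  · rw [hermForm, hermForm, hb, ← hc, hb]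
end

section
/- Let F be a field of characteristic different from 2 and ℍ[F] the quaternion algebra over F, with conjugation x ↦ x̄, norm N(x) = x·x̄ ∈ F, and polar form n(x, y) = N(x + y) − N(x) − N(y). Define X : ℍ[F]³ → ℍ[F] by X(x, y, z) = x·ȳ·z − z·ȳ·x. Then X is an alternating trilinear map satisfying, for all x, y, z ∈ ℍ[F]: n(X(x,y,z), x) = n(X(x,y,z), y) = n(X(x,y,z), z) = 0 and n(X(x,y,z), X(x,y,z)) = det of the 3×3 matrix with entries n(x,x), n(x,y), n(x,z); n(y,x), n(y,y), n(y,z); n(z,x), n(z,y), n(z,z). Hence X is a 3-fold cross product on ℍ[F] relative to the nondegenerate symmetric bilinear form n. -/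
/-!
In the basis `1, i, j, k` the polar form is `n(x, y) = 2 ∑ xₐ yₐ`, twice the standard dot
product (`qPolar_eq`), and the four coordinates of `X(x, y, z)` are, up to sign, twice the `3 × 3`
minors of the `3 × 4` matrix with rows `x, y, z` (the lemmas `qCross_re`, …, `qCross_imK`). So `X`
is twice the classical triple vector product on a four-dimensional space: orthogonality to `x, y, z`
is the vanishing of a `4 × 4` determinant with a repeated row, and the norm formula is the
Cauchy–Binet identity for the Gram determinant, the scalar factor being `2 · 2² = 2³` on both sides.
Nondegeneracy follows by pairing with the basis vectors, using `2 ≠ 0`; trilinearity is immediate,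
and `X` alternates because `x x̄ = x̄ x` is a scalar, hence central.
-/

open Quaternion

/-- The polar form `n(x,y) = N(x+y) − N(x) − N(y)` of the quaternion norm
`N = normSq`. -/
def qPolar (F : Type*) [Field F] (x y : ℍ[F]) : F :=
  Quaternion.normSq (x + y) - Quaternion.normSq x - Quaternion.normSq y

/-- The triple product `X(x,y,z) = x·ȳ·z − z·ȳ·x` on the quaternions. -/
def qCross (F : Type*) [Field F] (x y z : ℍ[F]) : ℍ[F] :=
  x * star y * z - z * star y * x

/-- The polar form is twice the standard dot product in the basis `1, i, j, k`. -/
theorem qPolar_eq (F : Type*) [Field F] (x y : ℍ[F]) :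
    qPolar F x y =
      2 * (x.re * y.re + x.imI * y.imI + x.imJ * y.imJ + x.imK * y.imK) := by
  simp only [qPolar, Quaternion.normSq_def', Quaternion.re_add, Quaternion.imI_add,
    Quaternion.imJ_add, Quaternion.imK_add]
  ring

theorem qCross_re (F : Type*) [Field F] (x y z : ℍ[F]) :
    (qCross F x y z).re = 2 *
      (x.imI * (y.imJ * z.imK - y.imK * z.imJ) - x.imJ * (y.imI * z.imK - y.imK * z.imI)
        + x.imK * (y.imI * z.imJ - y.imJ * z.imI)) := by
  simp [qCross]
  ring

theorem qCross_imI (F : Type*) [Field F] (x y z : ℍ[F]) :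
    (qCross F x y z).imI = -2 *
      (x.re * (y.imJ * z.imK - y.imK * z.imJ) - x.imJ * (y.re * z.imK - y.imK * z.re)
        + x.imK * (y.re * z.imJ - y.imJ * z.re)) := by
  simp [qCross]
  ring

theorem qCross_imJ (F : Type*) [Field F] (x y z : ℍ[F]) :
    (qCross F x y z).imJ = 2 *
      (x.re * (y.imI * z.imK - y.imK * z.imI) - x.imI * (y.re * z.imK - y.imK * z.re)
        + x.imK * (y.re * z.imI - y.imI * z.re)) := by
  simp [qCross]
  ring

theorem qCross_imK (F : Type*) [Field F] (x y z : ℍ[F]) :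
    (qCross F x y z).imK = -2 *
      (x.re * (y.imI * z.imJ - y.imJ * z.imI) - x.imI * (y.re * z.imJ - y.imJ * z.re)
        + x.imJ * (y.re * z.imI - y.imI * z.re)) := by
  simp [qCross]
  ring

/-- `X(x,y,z) = x·ȳ·z − z·ȳ·x` is an alternating trilinear map on the
quaternions which is a 3-fold cross product relative to the nondegenerate symmetric
bilinear polar form `n` of the quaternion norm. -/
theorem stmt14 (F : Type*) [Field F] (hchar : (2 : F) ≠ 0) :
    -- `X` is trilinear:
    (∀ (x x' y z : ℍ[F]), qCross F (x + x') y z = qCross F x y z + qCross F x' y z) ∧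
    (∀ (c : F) (x y z : ℍ[F]), qCross F (c • x) y z = c • qCross F x y z) ∧
    (∀ (x y y' z : ℍ[F]), qCross F x (y + y') z = qCross F x y z + qCross F x y' z) ∧
    (∀ (c : F) (x y z : ℍ[F]), qCross F x (c • y) z = c • qCross F x y z) ∧
    (∀ (x y z z' : ℍ[F]), qCross F x y (z + z') = qCross F x y z + qCross F x y z') ∧
    (∀ (c : F) (x y z : ℍ[F]), qCross F x y (c • z) = c • qCross F x y z) ∧
    -- `X` is alternating:
    (∀ x z : ℍ[F], qCross F x x z = 0) ∧
    (∀ x y : ℍ[F], qCross F x y y = 0) ∧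
    (∀ x y : ℍ[F], qCross F x y x = 0) ∧
    -- `n` is a nondegenerate symmetric bilinear form:
    (∀ (x x' y : ℍ[F]), qPolar F (x + x') y = qPolar F x y + qPolar F x' y) ∧
    (∀ (c : F) (x y : ℍ[F]), qPolar F (c • x) y = c * qPolar F x y) ∧
    (∀ x y : ℍ[F], qPolar F x y = qPolar F y x) ∧
    (∀ x : ℍ[F], (∀ y : ℍ[F], qPolar F x y = 0) → x = 0) ∧
    -- the two axioms of a 3-fold cross product relative to `n`:
    (∀ x y z : ℍ[F],
      qPolar F (qCross F x y z) x = 0 ∧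
      qPolar F (qCross F x y z) y = 0 ∧
      qPolar F (qCross F x y z) z = 0) ∧
    (∀ x y z : ℍ[F],
      qPolar F (qCross F x y z) (qCross F x y z) =
        Matrix.det !![qPolar F x x, qPolar F x y, qPolar F x z;
                      qPolar F y x, qPolar F y y, qPolar F y z;
                      qPolar F z x, qPolar F z y, qPolar F z z]) := by
  refine ⟨?_, ?_, ?_, ?_, ?_, ?_, ?_, ?_, ?_, ?_, ?_, ?_, ?_, ?_, ?_⟩
  · intro x x' y z
    simp only [qCross]
    noncomm_ring
  · intro c x y z
    simp [qCross, smul_sub]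
  · intro x y y' z
    simp only [qCross, star_add]
    noncomm_ring
  · intro c x y z
    simp [qCross, smul_sub]
  · intro x y z z'
    simp only [qCross]
    noncomm_ring
  · intro c x y z
    simp [qCross, smul_sub]
  · intro x z
    rw [qCross, mul_assoc z, Quaternion.self_mul_star, Quaternion.star_mul_self,
      (Quaternion.coe_commutes _ z), sub_self]
  · intro x y
    rw [qCross, mul_assoc x, Quaternion.self_mul_star, Quaternion.star_mul_self,
      (Quaternion.coe_commutes _ x), sub_self]
  · intro x y
    exact sub_self _
  · intro x x' y
    simp only [qPolar_eq, Quaternion.re_add, Quaternion.imI_add, Quaternion.imJ_add,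
      Quaternion.imK_add]
    ring
  · intro c x y
    simp only [qPolar_eq, Quaternion.re_smul, Quaternion.imI_smul, Quaternion.imJ_smul,
      Quaternion.imK_smul, smul_eq_mul]
    ring
  · intro x y
    simp only [qPolar_eq]
    ring
  · intro x h
    -- Pairing with a basis vector returns twice the corresponding coordinate.
    have h0 : x.re = 0 := by
      have e := (qPolar_eq F x ⟨1, 0, 0, 0⟩).symm.trans (h ⟨1, 0, 0, 0⟩)
      simpa [hchar] using e
    have h1 : x.imI = 0 := by
      have e := (qPolar_eq F x ⟨0, 1, 0, 0⟩).symm.trans (h ⟨0, 1, 0, 0⟩)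
      simpa [hchar] using e
    have h2 : x.imJ = 0 := by
      have e := (qPolar_eq F x ⟨0, 0, 1, 0⟩).symm.trans (h ⟨0, 0, 1, 0⟩)
      simpa [hchar] using e
    have h3 : x.imK = 0 := by
      have e := (qPolar_eq F x ⟨0, 0, 0, 1⟩).symm.trans (h ⟨0, 0, 0, 1⟩)
      simpa [hchar] using e
    exact QuaternionAlgebra.ext h0 h1 h2 h3
  · intro x y z
    simp only [qPolar_eq, qCross_re, qCross_imI, qCross_imJ, qCross_imK]
    refine ⟨?_, ?_, ?_⟩ <;> ring
  · intro x y z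
    simp only [Matrix.det_fin_three, Matrix.of_apply, Matrix.cons_val', Matrix.cons_val,
      qPolar_eq, qCross_re, qCross_imI, qCross_imJ, qCross_imK]
    ring
end

section
/- Let F be an algebraically closed field of characteristic different from 2, V an F-vector space of dimension n ≥ 3, X : V^{n−1} → V an alternating (n−1)-fold cross product relative to a nondegenerate symmetric bilinear form b, and G an abelian group. Two G-gradings V = ⊕_{g∈G} V_g and V = ⊕_{g∈G} V'_g on (V, X) are isomorphic (i.e. there is an invertible linear map φ : V → V with φ(X(v₁,…,v_{n−1})) = X(φ(v₁),…,φ(v_{n−1})) for all v₁,…,v_{n−1} ∈ V and φ(V_g) = V'_g for all g ∈ G) if and only if dim V_g = dim V'_g for every g ∈ G. -/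
/-!
The form `Φ(v₀, …, vₘ) = b(v₀, X(v₁, …, vₘ))` with `m = n - 1` is alternating, and it is nonzero
because `X` has nonzero Gram determinants on an orthogonal basis (`volForm_ne_zero`). Hence for
every basis `e` of `V` the vectors `X(e₀, …, êₖ, …, eₘ)` are nonzero multiples of the vectors of the
`b`-dual basis. If `e` is homogeneous, so is the dual basis (`dualBasis_mem`), which means that `b`
pairs `𝒱 g` and `𝒱 h` trivially unless `g * h = t`, where `t = ∏ deg eₖ` depends only on the
dimensions of the components (`form_eq_zero`).

Now suppose the dimensions agree and let `ψ` be any linear isomorphism with `ψ (𝒱 g) = 𝒲 g`. The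
form `b(ψ u, ψ v)` equals `b(S u, v)` for an invertible self-adjoint `S`, which preserves each `𝒱 g`
since `t` is the same for both gradings. Over an algebraically closed field of characteristic not
two, `S = R ^ 2` for a polynomial `R` in `S` (`exists_aeval_sq_eq`), so `R` is self-adjoint and
preserves each `𝒱 g` too, and `φ = ψ R⁻¹` is a graded isometry (`exists_graded_isometry`).

As top-degree forms are unique up to scalars, `X(φ v₁, …, φ vₘ) = c • φ(X(v₁, …, vₘ))` for some
`c ≠ 0`. Since `m ≥ 2`, there is `a` with `a ^ (m - 1) = c⁻¹`, and `a • φ` commutes with `X`.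
This rescaling makes it unnecessary to find isometries of determinant one. The converse
implication is clear, as linear isomorphisms preserve dimensions.
-/

open Module

/-! ### Square roots of invertible endomorphisms -/

/-- If `m` has nonzero constant coefficient, then the class of `X` is a square in `F[X] / (m)`:
interpolation of square roots at the roots of `m` gives a square root modulo a nilpotent,
and Newton's method corrects it. -/
theorem exists_dvd_sq_sub_X {F : Type*} [Field F] [IsAlgClosed F] (hchar : (2 : F) ≠ 0)
    (m : Polynomial F) (hm0 : m.eval 0 ≠ 0) :
    ∃ p : Polynomial F, m ∣ p ^ 2 - Polynomial.X := by
  classical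
  have hm : m ≠ 0 := by rintro rfl; simp at hm0
  choose s hs using fun a : F => IsAlgClosed.exists_pow_nat_eq a (n := 2) (by norm_num)
  set q : Polynomial F := Lagrange.interpolate m.roots.toFinset id s with hq
  have hqe : ∀ a ∈ m.roots, q.eval a = s a := fun a ha =>
    Lagrange.eval_interpolate_at_node (v := id) s Function.injective_id.injOn (by simpa using ha)
  have hsplit : m = Polynomial.C m.leadingCoeff *
      (m.roots.map fun a => Polynomial.X - Polynomial.C a).prod :=
    (IsAlgClosed.splits m).eq_prod_roots
  have hdvd : m ∣ (q ^ 2 - Polynomial.X) ^ m.roots.card := by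
    have key : ∀ (g : Polynomial F) (t : Multiset F), (∀ a ∈ t, g.IsRoot a) →
        (t.map fun a => Polynomial.X - Polynomial.C a).prod ∣ g ^ t.card := by
      intro g t
      induction t using Multiset.induction with
      | empty => simp
      | cons a t ih =>
        intro h
        rw [Multiset.map_cons, Multiset.prod_cons, Multiset.card_cons, pow_succ']
        exact mul_dvd_mul (Polynomial.dvd_iff_isRoot.mpr (h a (by simp)))
          (ih fun x hx => h x (by simp [hx]))
    have h1 := key (q ^ 2 - Polynomial.X) m.roots (by
      intro a ha
      simp [Polynomial.IsRoot, hqe a ha, hs])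
    conv_lhs => rw [hsplit]
    have hu : IsUnit (Polynomial.C m.leadingCoeff) :=
      Polynomial.isUnit_C.mpr (by simpa using hm)
    exact (hu.mul_left_dvd).mpr h1
  have hcop : IsCoprime q m := by
    apply (Polynomial.isCoprime_iff_aeval_ne_zero_of_isAlgClosed F F q m).mpr
    intro a
    by_contra! h
    simp only [Polynomial.coe_aeval_eq_eval] at h
    have ha : a ∈ m.roots := by simpa [hm] using h.2
    have : a = 0 := by rw [← hs a, ← hqe a ha, h.1]; simp
    exact hm0 (this ▸ h.2)
  let A := AdjoinRoot m
  let P : Polynomial A := Polynomial.X ^ 2 - Polynomial.C (AdjoinRoot.root m)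
  have hnil : IsNilpotent (Polynomial.aeval (AdjoinRoot.mk m q) P) := by
    refine ⟨m.roots.card, ?_⟩
    have : Polynomial.aeval (AdjoinRoot.mk m q) P
        = AdjoinRoot.mk m (q ^ 2 - Polynomial.X) := by simp [P, A]
    rw [this, ← map_pow, AdjoinRoot.mk_eq_zero]
    exact hdvd
  have hunit : IsUnit (Polynomial.aeval (AdjoinRoot.mk m q) (Polynomial.derivative P)) := by
    have : Polynomial.aeval (AdjoinRoot.mk m q) (Polynomial.derivative P)
        = AdjoinRoot.mk m (Polynomial.C 2 * q) := by
      simp [P, A, one_add_one_eq_two, map_ofNat (AdjoinRoot.of m) 2]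
    rw [this, map_mul]
    refine IsUnit.mul ((Polynomial.isUnit_C.mpr (IsUnit.mk0 _ hchar)).map _) ?_
    obtain ⟨u, v, huv⟩ := hcop
    refine IsUnit.of_mul_eq_one (AdjoinRoot.mk m u) ?_
    have := congrArg (AdjoinRoot.mk m) huv
    simpa [mul_comm] using this
  obtain ⟨r, ⟨-, hr⟩, -⟩ := Polynomial.existsUnique_nilpotent_sub_and_aeval_eq_zero hnil hunit
  obtain ⟨p, rfl⟩ := AdjoinRoot.mk_surjective r
  refine ⟨p, ?_⟩
  rw [← AdjoinRoot.mk_eq_zero, ← hr]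
  simp [P, A]

/-- The square root is a polynomial in `T`, so it inherits self-adjointness and invariant subspaces
from `T`. -/
theorem exists_aeval_sq_eq {F V : Type*} [Field F] [IsAlgClosed F] [AddCommGroup V] [Module F V]
    [FiniteDimensional F V] (hchar : (2 : F) ≠ 0) (T : Module.End F V) (hT : IsUnit T) :
    ∃ p : Polynomial F, Polynomial.aeval T p ^ 2 = T := by
  have h0 : (minpoly F T).eval 0 ≠ 0 := by
    rw [← Polynomial.coeff_zero_eq_eval_zero]
    obtain ⟨e, rfl⟩ := hT
    intro h
    have hX : Polynomial.X ∣ minpoly F (e : Module.End F V) := Polynomial.X_dvd_iff.mpr h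
    obtain ⟨k, hk⟩ := hX
    have hz : Polynomial.aeval (e : Module.End F V) k = 0 := by
      have := minpoly.aeval F (e : Module.End F V)
      rw [hk, map_mul, Polynomial.aeval_X] at this
      exact (Units.mul_right_eq_zero e).mp this
    have hne := minpoly.ne_zero (Algebra.IsIntegral.isIntegral (R := F) (e : Module.End F V))
    have hk0 : k ≠ 0 := by rintro rfl; simp at hk; exact hne hk
    have hle := Polynomial.natDegree_le_of_dvd (minpoly.dvd F _ hz) hk0
    rw [hk, Polynomial.natDegree_X_mul hk0] at hle
    omega
  obtain ⟨p, k, hp⟩ := exists_dvd_sq_sub_X hchar (minpoly F T) h0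
  refine ⟨p, ?_⟩
  have := congrArg (Polynomial.aeval T) hp
  simpa [sub_eq_zero] using this

/-! ### Homogeneous bases and the volume form -/

/-- A homogeneous vector has no coordinates along homogeneous basis vectors of other degrees. -/
theorem repr_eq_zero_of_mem {F V ι G : Type*} [Field F] [AddCommGroup V] [Module F V]
    [Fintype ι] [DecidableEq G] {𝒱 : G → Submodule F V} (h : DirectSum.IsInternal 𝒱)
    (e : Basis ι F V) (d : ι → G) (he : ∀ i, e i ∈ 𝒱 (d i)) {g : G} {v : V} (hv : v ∈ 𝒱 g)
    (k : ι) (hk : d k ≠ g) : e.repr v k = 0 := by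
  classical
  let _ := DirectSum.IsInternal.chooseDecomposition 𝒱 h
  have h1 : ((DirectSum.decompose 𝒱 v) (d k) : V) = 0 :=
    DirectSum.decompose_of_mem_ne 𝒱 hv hk.symm
  have h2 : ((DirectSum.decompose 𝒱 v) (d k) : V)
      = ∑ i, (if d i = d k then e.repr v i else 0) • e i := by
    conv_lhs => rw [← e.sum_repr v]
    rw [DirectSum.decompose_sum, DFinsupp.finsetSum_apply, AddSubmonoidClass.coe_finsetSum]
    refine Finset.sum_congr rfl fun i _ => ?_
    split_ifs with hi
    · rw [← hi]
      exact DirectSum.decompose_of_mem_same 𝒱 (Submodule.smul_mem _ _ (he i))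
    · rw [zero_smul]
      exact DirectSum.decompose_of_mem_ne 𝒱 (Submodule.smul_mem _ _ (he i)) hi
  rw [h1] at h2
  simpa using Fintype.linearIndependent_iff.mp e.linearIndependent _ h2.symm k

/-- The top-degree form `(v₀, …, vₘ) ↦ b(v₀, X(v₁, …, vₘ))` attached to an alternating `m`-fold
cross product. -/
def volForm {F V : Type*} [Field F] [AddCommGroup V] [Module F V] {m : ℕ}
    (b : LinearMap.BilinForm F V) (hbsymm : ∀ u v : V, b u v = b v u)
    (X : MultilinearMap F (fun _ : Fin m => V) V)
    (halt : ∀ (v : Fin m → V) (i j : Fin m), i ≠ j → v i = v j → X v = 0)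
    (hX : IsCrossProduct b X) : V [⋀^Fin (m + 1)]→ₗ[F] F :=
  { LinearMap.uncurryLeft (M := fun _ : Fin (m + 1) => V)
      { toFun := fun u => (b u).compMultilinearMap X
        map_add' := fun u v => by ext; simp
        map_smul' := fun c u => by ext; simp } with
    map_eq_zero_of_eq' := by
      intro v i j hv hij
      change b (v 0) (X (Fin.tail v)) = 0
      induction i using Fin.cases with
      | zero =>
        induction j using Fin.cases with
        | zero => exact absurd rfl hij
        | succ j => rw [hbsymm, hv]; exact hX.1 (Fin.tail v) j
      | succ i =>
        induction j using Fin.cases with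
        | zero => rw [hbsymm, ← hv]; exact hX.1 (Fin.tail v) i
        | succ j =>
          rw [halt (Fin.tail v) i j (fun h => hij (h ▸ rfl)) hv, map_zero] }

section
variable {F V : Type*} [Field F] [AddCommGroup V] [Module F V]
    {m : ℕ} {b : LinearMap.BilinForm F V} {X : MultilinearMap F (fun _ : Fin m => V) V}

theorem volForm_apply (hbsymm : ∀ u v : V, b u v = b v u)
    (halt : ∀ (v : Fin m → V) (i j : Fin m), i ≠ j → v i = v j → X v = 0)
    (hX : IsCrossProduct b X) (v : Fin (m + 1) → V) :
    volForm b hbsymm X halt hX v = b (v 0) (X fun i => v i.succ) := rfl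

variable [FiniteDimensional F V]

/-- In characteristic not two, the Gram determinant of all but one vector of an orthogonal basis
is nonzero, so `X` does not vanish. -/
theorem volForm_ne_zero (hchar : (2 : F) ≠ 0) (hdim : finrank F V = m + 1)
    (hbnd : b.Nondegenerate) (hbsymm : ∀ u v : V, b u v = b v u)
    (halt : ∀ (v : Fin m → V) (i j : Fin m), i ≠ j → v i = v j → X v = 0)
    (hX : IsCrossProduct b X) : volForm b hbsymm X halt hX ≠ 0 := by
  have : Invertible (2 : F) := invertibleOfNonzero hchar
  obtain ⟨e, he⟩ := LinearMap.BilinForm.exists_orthogonal_basis (B := b) ⟨fun u v => hbsymm u v⟩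
  have hne := he.not_isOrtho_basis_self_of_separatingLeft hbnd.1
  let w : Fin m → V := fun i => e (Fin.cast hdim.symm i.succ)
  have hdet : b (X w) (X w) ≠ 0 := by
    rw [hX.2 w]
    have : (Matrix.of fun i j : Fin m => b (w i) (w j))
        = Matrix.diagonal fun i => b (w i) (w i) := by
      ext i j
      by_cases hij : i = j
      · subst hij; simp
      · rw [Matrix.diagonal_apply_ne _ hij]
        exact he (fun h => hij (by simpa using h))
    rw [this, Matrix.det_diagonal]
    exact Finset.prod_ne_zero_iff.mpr fun i _ => hne _
  intro h
  apply hdet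
  have := congrArg (fun f => f (Fin.cons (X w) w : Fin (m + 1) → V)) h
  simpa [volForm_apply] using this

/-! ### Compatibility of `b` with gradings -/

/-- The vectors `X(e₀, …, êₖ, …, eₘ)` are, up to scalars, the basis dual to `e` with respect to
`b`. When `e` is homogeneous, the dual basis is thus homogeneous with degrees `t / deg eₖ`,
`t` being the product of all the degrees. -/
theorem dualBasis_mem (hchar : (2 : F) ≠ 0) (hdim : finrank F V = m + 1)
    (hbnd : b.Nondegenerate) (hbsymm : ∀ u v : V, b u v = b v u)
    (halt : ∀ (v : Fin m → V) (i j : Fin m), i ≠ j → v i = v j → X v = 0)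
    (hX : IsCrossProduct b X) {G : Type*} [CommGroup G] {𝒱 : G → Submodule F V}
    (hgr : ∀ (g : Fin m → G) (v : Fin m → V), (∀ i, v i ∈ 𝒱 (g i)) → X v ∈ 𝒱 (∏ i, g i))
    (e : Basis (Fin (m + 1)) F V) (d : Fin (m + 1) → G) (he : ∀ i, e i ∈ 𝒱 (d i))
    (k : Fin (m + 1)) : b.dualBasis hbnd e k ∈ 𝒱 ((∏ i, d i) / d k) := by
  set f : V := X fun j => e (k.succAbove j) with hf
  have hfmem : f ∈ 𝒱 ((∏ i, d i) / d k) := by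
    rw [Fin.prod_univ_succAbove d k, mul_div_cancel_left]
    exact hgr _ _ fun i => he _
  have hrepr : ∀ i, (b.dualBasis hbnd e).repr f i = b f (e i) := fun i =>
    LinearMap.BilinForm.dualBasis_repr_apply hbnd e f i
  have hoff : ∀ i, i ≠ k → b f (e i) = 0 := by
    intro i hi
    obtain ⟨j, rfl⟩ := Fin.exists_succAbove_eq hi
    exact hX.1 (fun j => e (k.succAbove j)) j
  have hon : b f (e k) ≠ 0 := by
    have h := (AlternatingMap.map_basis_eq_zero_iff (e.reindex k.cycleRange)
      (volForm b hbsymm X halt hX)).not.mpr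
        (volForm_ne_zero hchar hdim hbnd hbsymm halt hX)
    rw [volForm_apply] at h
    simp only [Basis.reindex_apply, Fin.cycleRange_symm_zero, Fin.cycleRange_symm_succ] at h
    rwa [hbsymm]
  have hsum : f = b f (e k) • b.dualBasis hbnd e k := by
    conv_lhs => rw [← (b.dualBasis hbnd e).sum_repr f]
    rw [Finset.sum_eq_single k]
    · rw [hrepr]
    · intro i _ hi; rw [hrepr, hoff i hi, zero_smul]
    · simp
  rw [hsum] at hfmem
  exact (Submodule.smul_mem_iff _ hon).mp hfmem

/-- A grading makes `b` homogeneous: `b(𝒱 g, 𝒱 h) = 0` unless `g * h` is the product `t` of the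
degrees of a homogeneous basis. -/
theorem form_eq_zero (hchar : (2 : F) ≠ 0) (hdim : finrank F V = m + 1)
    (hbnd : b.Nondegenerate) (hbsymm : ∀ u v : V, b u v = b v u)
    (halt : ∀ (v : Fin m → V) (i j : Fin m), i ≠ j → v i = v j → X v = 0)
    (hX : IsCrossProduct b X) {G : Type*} [CommGroup G] [DecidableEq G] {𝒱 : G → Submodule F V}
    (hint : DirectSum.IsInternal 𝒱)
    (hgr : ∀ (g : Fin m → G) (v : Fin m → V), (∀ i, v i ∈ 𝒱 (g i)) → X v ∈ 𝒱 (∏ i, g i))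
    (e : Basis (Fin (m + 1)) F V) (d : Fin (m + 1) → G) (he : ∀ i, e i ∈ 𝒱 (d i))
    {g h : G} (hgh : g * h ≠ ∏ i, d i) {u v : V} (hu : u ∈ 𝒱 g) (hv : v ∈ 𝒱 h) :
    b u v = 0 := by
  rw [← e.sum_repr v, map_sum]
  refine Finset.sum_eq_zero fun k _ => ?_
  rw [map_smul, smul_eq_mul]
  by_cases hk : d k = h
  · have := repr_eq_zero_of_mem hint (b.dualBasis hbnd e) (fun i => (∏ i, d i) / d i)
      (dualBasis_mem hchar hdim hbnd hbsymm halt hX hgr e d he) hu k (by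
        intro h'; apply hgh; rw [← h', hk, div_mul_cancel])
    rw [LinearMap.BilinForm.dualBasis_repr_apply] at this
    rw [this, mul_zero]
  · rw [repr_eq_zero_of_mem hint e d he hv k hk, zero_mul]

/-- A vector orthogonal to every component that `b` does not pair with `𝒱 g` lies in `𝒱 g`. -/
theorem mem_of_orthogonal (hchar : (2 : F) ≠ 0) (hdim : finrank F V = m + 1)
    (hbnd : b.Nondegenerate) (hbsymm : ∀ u v : V, b u v = b v u)
    (halt : ∀ (v : Fin m → V) (i j : Fin m), i ≠ j → v i = v j → X v = 0)
    (hX : IsCrossProduct b X) {G : Type*} [CommGroup G] {𝒱 : G → Submodule F V}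
    (hgr : ∀ (g : Fin m → G) (v : Fin m → V), (∀ i, v i ∈ 𝒱 (g i)) → X v ∈ 𝒱 (∏ i, g i))
    (e : Basis (Fin (m + 1)) F V) (d : Fin (m + 1) → G) (he : ∀ i, e i ∈ 𝒱 (d i))
    {g : G} {u : V} (hu : ∀ h, g * h ≠ ∏ i, d i → ∀ v ∈ 𝒱 h, b u v = 0) : u ∈ 𝒱 g := by
  rw [← (b.dualBasis hbnd e).sum_repr u]
  refine Submodule.sum_mem _ fun k _ => ?_
  rw [LinearMap.BilinForm.dualBasis_repr_apply]
  by_cases hk : g * d k = ∏ i, d i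
  · have := dualBasis_mem hchar hdim hbnd hbsymm halt hX hgr e d he k
    rw [← hk, mul_div_cancel_right] at this
    exact Submodule.smul_mem _ _ this
  · rw [hu _ hk _ (he k), zero_smul]
    exact zero_mem _

/-! ### Graded isometries and automorphisms -/

/-- Isometries of `b` intertwine `X` with itself up to a nonzero scalar, because the space of
top-degree forms is one-dimensional. -/
theorem exists_scalar_of_isometry (hchar : (2 : F) ≠ 0) (hdim : finrank F V = m + 1)
    (hbnd : b.Nondegenerate) (hbsymm : ∀ u v : V, b u v = b v u)
    (halt : ∀ (v : Fin m → V) (i j : Fin m), i ≠ j → v i = v j → X v = 0)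
    (hX : IsCrossProduct b X) (φ : V ≃ₗ[F] V) (hφ : ∀ u v, b (φ u) (φ v) = b u v) :
    ∃ c : F, c ≠ 0 ∧ ∀ v : Fin m → V, (X fun i => φ (v i)) = c • φ (X v) := by
  set Φ := volForm b hbsymm X halt hX with hΦ
  have hΦ0 : Φ ≠ 0 := volForm_ne_zero hchar hdim hbnd hbsymm halt hX
  let e : Basis (Fin (m + 1)) F V := finBasisOfFinrankEq F V hdim
  have h1 : Φ e ≠ 0 := (Φ.map_basis_eq_zero_iff e).not.mpr hΦ0
  have h2 : Φ (e.map φ) ≠ 0 := (Φ.map_basis_eq_zero_iff (e.map φ)).not.mpr hΦ0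
  have hcomp : Φ.compLinearMap (φ : V →ₗ[F] V) = (Φ (e.map φ) / Φ e) • Φ := by
    refine e.ext_alternating fun v hv => ?_
    have key : ∀ f : V [⋀^Fin (m + 1)]→ₗ[F] F, f (fun i => e (v i))
        = f e * e.det fun i => e (v i) := fun f => by
      conv_lhs => rw [f.eq_smul_basis_det e]
      simp
    rw [key, AlternatingMap.smul_apply, key Φ, smul_eq_mul]
    have : (Φ.compLinearMap (φ : V →ₗ[F] V)) e = Φ (e.map φ) := by
      rw [AlternatingMap.compLinearMap_apply]; rfl
    rw [this]
    field_simp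
  refine ⟨Φ (e.map φ) / Φ e, div_ne_zero h2 h1, fun v => ?_⟩
  rw [← sub_eq_zero]
  refine hbnd.2 _ fun u => ?_
  obtain ⟨u, rfl⟩ := φ.surjective u
  have := congrArg (fun f => f (Fin.cons u v : Fin (m + 1) → V)) hcomp
  simp only [AlternatingMap.compLinearMap_apply, AlternatingMap.smul_apply, hΦ,
    volForm_apply, Fin.cons_zero, Fin.cons_succ, smul_eq_mul, LinearEquiv.coe_coe] at this
  rw [map_sub, map_smul, hφ, sub_eq_zero, smul_eq_mul]
  exact this

/-- Two gradings with equal component dimensions admit an isometry of `b` carrying one to the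
other. Starting from any graded isomorphism `ψ`, the pulled back form is `b(S ·, ·)` for a
self-adjoint degree-preserving `S`, and `ψ` is corrected by a polynomial square root of `S`. -/
theorem exists_graded_isometry [IsAlgClosed F] (hchar : (2 : F) ≠ 0) (hdim : finrank F V = m + 1)
    (hbnd : b.Nondegenerate) (hbsymm : ∀ u v : V, b u v = b v u)
    (halt : ∀ (v : Fin m → V) (i j : Fin m), i ≠ j → v i = v j → X v = 0)
    (hX : IsCrossProduct b X) {G : Type*} [CommGroup G] [DecidableEq G]
    {𝒱 𝒲 : G → Submodule F V}
    (hV : DirectSum.IsInternal 𝒱)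
    (hVgr : ∀ (g : Fin m → G) (v : Fin m → V), (∀ i, v i ∈ 𝒱 (g i)) → X v ∈ 𝒱 (∏ i, g i))
    (hW : DirectSum.IsInternal 𝒲)
    (hWgr : ∀ (g : Fin m → G) (v : Fin m → V), (∀ i, v i ∈ 𝒲 (g i)) → X v ∈ 𝒲 (∏ i, g i))
    (hfin : ∀ g : G, finrank F ↥(𝒱 g) = finrank F ↥(𝒲 g)) :
    ∃ φ : V ≃ₗ[F] V, (∀ u v, b (φ u) (φ v) = b u v) ∧
      ∀ g : G, Submodule.map (φ : V →ₗ[F] V) (𝒱 g) = 𝒲 g := by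
  classical
  let bV := hV.collectedBasis fun g => finBasis F (𝒱 g)
  let bW := hW.collectedBasis fun g => finBasisOfFinrankEq F (𝒲 g) (hfin g).symm
  have : Fintype (Σ g, Fin (finrank F (𝒱 g))) := FiniteDimensional.fintypeBasisIndex bV
  have hcard : Fintype.card (Σ g, Fin (finrank F (𝒱 g))) = m + 1 := by
    rw [← finrank_eq_card_basis bV, hdim]
  let σ := Fintype.equivFinOfCardEq hcard
  let e := bV.reindex σ
  let e' := bW.reindex σ
  let d : Fin (m + 1) → G := fun i => (σ.symm i).1
  have he : ∀ i, e i ∈ 𝒱 (d i) := fun i => by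
    simp only [e, Basis.reindex_apply]
    exact hV.collectedBasis_mem _ _
  have he' : ∀ i, e' i ∈ 𝒲 (d i) := fun i => by
    simp only [e', Basis.reindex_apply]
    exact hW.collectedBasis_mem _ _
  let ψ : V ≃ₗ[F] V := e.equiv e' (Equiv.refl _)
  have hψ : ∀ g, ∀ v ∈ 𝒱 g, ψ v ∈ 𝒲 g := by
    intro g v hv
    rw [← e.sum_repr v, map_sum]
    refine Submodule.sum_mem _ fun k _ => ?_
    rw [map_smul]
    by_cases hk : d k = g
    · have : ψ (e k) = e' k := by simp [ψ]
      rw [this, ← hk]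
      exact Submodule.smul_mem _ _ (he' k)
    · rw [repr_eq_zero_of_mem hV e d he hv k hk, zero_smul]
      exact zero_mem _
  let b' : LinearMap.BilinForm F V := b.compl₁₂ (ψ : V →ₗ[F] V) (ψ : V →ₗ[F] V)
  let S : Module.End F V := ((b.toDual hbnd).symm : Dual F V →ₗ[F] V) ∘ₗ b'
  have hS : ∀ u v, b (S u) v = b (ψ u) (ψ v) := fun u v =>
    LinearMap.BilinForm.apply_toDual_symm_apply (hB := hbnd) (b' u) v
  have hSadj : ∀ u v, b (S u) v = b u (S v) := fun u v => by
    rw [hS, hbsymm u, hS, hbsymm]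
  have hSmem : ∀ g, ∀ v ∈ 𝒱 g, S v ∈ 𝒱 g := by
    intro g u hu
    refine mem_of_orthogonal hchar hdim hbnd hbsymm halt hX hVgr e d he fun h hh v hv => ?_
    rw [hS]
    exact form_eq_zero hchar hdim hbnd hbsymm halt hX hW hWgr e' d he' hh (hψ g u hu) (hψ h v hv)
  have hSinj : Function.Injective S := by
    rw [injective_iff_map_eq_zero]
    intro u hu
    apply ψ.injective
    rw [map_zero]
    refine hbnd.1 _ fun v => ?_
    obtain ⟨v, rfl⟩ := ψ.surjective v
    rw [← hS, hu]; simp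
  have hSunit : IsUnit S := (LinearMap.isUnit_iff_ker_eq_bot S).mpr (LinearMap.ker_eq_bot.mpr hSinj)
  obtain ⟨p, hp⟩ := exists_aeval_sq_eq hchar S hSunit
  have hpoly : ∀ q : Polynomial F,
      (∀ u v, b (Polynomial.aeval S q u) v = b u (Polynomial.aeval S q v)) ∧
      ∀ g, ∀ v ∈ 𝒱 g, Polynomial.aeval S q v ∈ 𝒱 g := by
    intro q
    induction q using Polynomial.induction_on' with
    | add q r hq hr =>
      refine ⟨fun u v => by simp [hq.1, hr.1], fun g v hv => ?_⟩
      simpa using add_mem (hq.2 g v hv) (hr.2 g v hv)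
    | monomial k a =>
      have hpow : (∀ u v, b ((S ^ k) u) v = b u ((S ^ k) v)) ∧
          ∀ g, ∀ v ∈ 𝒱 g, (S ^ k) v ∈ 𝒱 g := by
        induction k with
        | zero => simp
        | succ k ih =>
          refine ⟨fun u v => ?_, fun g v hv => ?_⟩
          · rw [pow_succ, Module.End.mul_apply, ih.1, hSadj, ← Module.End.mul_apply,
              ← pow_succ', pow_succ, Module.End.mul_apply]
          · rw [pow_succ, Module.End.mul_apply]
            exact ih.2 g _ (hSmem g v hv)
      refine ⟨fun u v => ?_, fun g v hv => ?_⟩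
      · simp [Polynomial.aeval_monomial, Module.algebraMap_end_apply, hpow.1]
      · simpa [Polynomial.aeval_monomial, Module.algebraMap_end_apply] using
          Submodule.smul_mem _ a (hpow.2 g v hv)
  set R : Module.End F V := Polynomial.aeval S p with hR
  have hRR : ∀ v, R (R v) = S v := fun v => by
    rw [← Module.End.mul_apply, ← sq, hp]
  have hRinj : Function.Injective R := fun u v huv => hSinj (by rw [← hRR, ← hRR, huv])
  let ρ : V ≃ₗ[F] V := LinearEquiv.ofInjectiveEndo R hRinj
  have hρ : ∀ v, ρ v = R v := fun v => rfl
  have hρmap : ∀ g, Submodule.map (ρ : V →ₗ[F] V) (𝒱 g) = 𝒱 g := fun g =>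
    Submodule.eq_of_le_of_finrank_eq
      (Submodule.map_le_iff_le_comap.mpr fun v hv => (hpoly p).2 g v hv)
      (LinearEquiv.finrank_map_eq ρ _)
  refine ⟨ρ.symm.trans ψ, fun u v => ?_, fun g => ?_⟩
  · obtain ⟨u, rfl⟩ := ρ.surjective u
    obtain ⟨v, rfl⟩ := ρ.surjective v
    simp only [LinearEquiv.trans_apply, LinearEquiv.symm_apply_apply]
    rw [← hS, ← hRR, (hpoly p).1, hρ, hρ]
  · refine Submodule.eq_of_le_of_finrank_eq (Submodule.map_le_iff_le_comap.mpr fun v hv => ?_)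
      ((LinearEquiv.finrank_map_eq (ρ.symm.trans ψ) _).trans (hfin g))
    rw [← hρmap g] at hv
    obtain ⟨w, hw, rfl⟩ := hv
    simpa using hψ g w hw

/-- A graded isometry intertwines `X` up to a scalar `c`; rescaling it by an `(m-1)`-th root of
`c⁻¹` gives an automorphism of `X` carrying `𝒱` to `𝒲`. -/
theorem exists_graded_automorphism [IsAlgClosed F] (hchar : (2 : F) ≠ 0) (hm : 2 ≤ m)
    (hdim : finrank F V = m + 1)
    (hbnd : b.Nondegenerate) (hbsymm : ∀ u v : V, b u v = b v u)
    (halt : ∀ (v : Fin m → V) (i j : Fin m), i ≠ j → v i = v j → X v = 0)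
    (hX : IsCrossProduct b X) {G : Type*} [CommGroup G] [DecidableEq G]
    {𝒱 𝒲 : G → Submodule F V}
    (hV : DirectSum.IsInternal 𝒱)
    (hVgr : ∀ (g : Fin m → G) (v : Fin m → V), (∀ i, v i ∈ 𝒱 (g i)) → X v ∈ 𝒱 (∏ i, g i))
    (hW : DirectSum.IsInternal 𝒲)
    (hWgr : ∀ (g : Fin m → G) (v : Fin m → V), (∀ i, v i ∈ 𝒲 (g i)) → X v ∈ 𝒲 (∏ i, g i))
    (hfin : ∀ g : G, finrank F ↥(𝒱 g) = finrank F ↥(𝒲 g)) :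
    ∃ φ : V ≃ₗ[F] V, (∀ v : Fin m → V, φ (X v) = X (fun i => φ (v i))) ∧
      ∀ g : G, Submodule.map (φ : V →ₗ[F] V) (𝒱 g) = 𝒲 g := by
  obtain ⟨φ, hφ, hφmap⟩ :=
    exists_graded_isometry hchar hdim hbnd hbsymm halt hX hV hVgr hW hWgr hfin
  obtain ⟨c, hc, hφX⟩ := exists_scalar_of_isometry hchar hdim hbnd hbsymm halt hX φ hφ
  obtain ⟨a, ha⟩ := IsAlgClosed.exists_pow_nat_eq c⁻¹ (n := m - 1) (by omega)
  have ha0 : a ≠ 0 := by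
    rintro rfl
    rw [zero_pow (by omega)] at ha
    exact inv_ne_zero hc ha.symm
  refine ⟨φ.trans (LinearEquiv.smulOfNeZero F V a ha0), fun v => ?_, fun g => ?_⟩
  · simp only [LinearEquiv.trans_apply, LinearEquiv.smulOfNeZero_apply]
    rw [X.map_smul_univ (fun _ => a) (fun i => φ (v i)), hφX, Finset.prod_const,
      Finset.card_univ, Fintype.card_fin, smul_smul]
    congr 1
    obtain ⟨k, rfl⟩ : ∃ k, m = k + 1 := ⟨m - 1, by omega⟩
    rw [Nat.add_sub_cancel] at ha
    rw [pow_succ, ha]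
    field_simp
  · rw [← hφmap g]
    ext w
    simp only [Submodule.mem_map, LinearEquiv.coe_coe, LinearEquiv.trans_apply,
      LinearEquiv.smulOfNeZero_apply]
    constructor
    · rintro ⟨v, hv, rfl⟩
      exact ⟨a • v, Submodule.smul_mem _ _ hv, by simp⟩
    · rintro ⟨v, hv, rfl⟩
      exact ⟨a⁻¹ • v, Submodule.smul_mem _ _ hv, by simp [ha0]⟩

end

/-- two `G`-gradings of an alternating `(n-1)`-fold cross product `(V, X)`
are isomorphic if and only if the dimensions of corresponding homogeneous components
agree. -/
theorem stmt16 (F V : Type*) [Field F] [IsAlgClosed F] [AddCommGroup V] [Module F V]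
    [FiniteDimensional F V]
    (hchar : (2 : F) ≠ 0)
    (n : ℕ) (hn : 3 ≤ n) (hdim : finrank F V = n)
    (b : LinearMap.BilinForm F V)
    (hbnd : b.Nondegenerate) (hbsymm : ∀ u v : V, b u v = b v u)
    (X : MultilinearMap F (fun _ : Fin (n - 1) => V) V)
    (halt : ∀ (v : Fin (n - 1) → V) (i j : Fin (n - 1)), i ≠ j → v i = v j → X v = 0)
    (hX : IsCrossProduct b X)
    (G : Type*) [CommGroup G] [DecidableEq G]
    (𝒱 𝒲 : G → Submodule F V)
    (hVinternal : DirectSum.IsInternal 𝒱)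
    (hVgraded : ∀ (g : Fin (n - 1) → G) (v : Fin (n - 1) → V),
      (∀ i, v i ∈ 𝒱 (g i)) → X v ∈ 𝒱 (∏ i, g i))
    (hWinternal : DirectSum.IsInternal 𝒲)
    (hWgraded : ∀ (g : Fin (n - 1) → G) (v : Fin (n - 1) → V),
      (∀ i, v i ∈ 𝒲 (g i)) → X v ∈ 𝒲 (∏ i, g i)) :
    (∃ φ : V ≃ₗ[F] V,
      (∀ v : Fin (n - 1) → V, φ (X v) = X (fun i => φ (v i))) ∧
      (∀ g : G, Submodule.map (φ : V →ₗ[F] V) (𝒱 g) = 𝒲 g)) ↔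
    (∀ g : G, finrank F ↥(𝒱 g) = finrank F ↥(𝒲 g)) := by
  constructor
  · rintro ⟨φ, -, hφ⟩ g
    rw [← hφ g]
    exact (LinearEquiv.finrank_map_eq φ _).symm
  · intro hfin
    obtain ⟨m, rfl⟩ : ∃ m, n = m + 1 := ⟨n - 1, by omega⟩
    exact exists_graded_automorphism (m := m) hchar (by omega) hdim hbnd hbsymm halt hX
      hVinternal hVgraded hWinternal hWgraded hfin
end

section
/- Let F be an algebraically closed field of characteristic different from 2, V an F-vector space of dimension n ≥ 3, X : V^{n−1} → V an alternating (n−1)-fold cross product relative to a nondegenerate symmetric bilinear form b, and G an abelian group. Suppose δ : G → ℕ is a function with finite support satisfying Σ_{g∈G} δ(g) = n and δ(g) = δ(g⁻¹h) for all g ∈ G, where h = ∏_{g∈G} g^{δ(g)}. Then there exists a G-grading V = ⊕_{g∈G} V_g on (V, X) with dim V_g = δ(g) for every g ∈ G. -/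
/-!
Put `h = ∏ g ^ δ g`. Index `n` basis vectors by the pairs `(g, k)` with `k < δ g`, the vector
`(g, k)` having degree `g`. The symmetry of `δ` makes `(g, k) ↦ (g⁻¹ h, k)` an involution `σ` of
this index set. Over an algebraically closed field of characteristic not 2 there is a basis `e`
with `b (e i) (e j) ≠ 0` exactly when `j = σ i` (`exists_paired_basis`): each two-element orbit of
`σ` spans a hyperbolic plane, each fixed point an anisotropic line. The grading is by the spans of
the basis vectors of a given degree.

It is compatible with `X` (`cross_mem_span`): the product of `n - 1` distinct basis vectors,
omitting only `e j`, is orthogonal to all of them, hence is a multiple of `e (σ j)`. The degree of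
`e (σ j)` is `(deg j)⁻¹ h`, and since `h` is the product of all degrees, this is the product of the
degrees of the factors. A product with a repeated factor vanishes as `X` is alternating, and
multilinearity extends the claim to all homogeneous vectors (`cross_graded`).
-/

open Module

theorem exists_orthonormal_family {F V ι : Type*} [Field F] [IsAlgClosed F] [AddCommGroup V]
    [Module F V] [FiniteDimensional F V] [Fintype ι] [DecidableEq ι] (hchar : (2 : F) ≠ 0)
    (b : LinearMap.BilinForm F V) (hbnd : b.Nondegenerate) (hbsymm : ∀ u v : V, b u v = b v u)
    (hcard : Fintype.card ι = finrank F V) :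
    ∃ f : ι → V, ∀ i j, b (f i) (f j) = if i = j then 1 else 0 := by
  have : Invertible (2 : F) := invertibleOfNonzero hchar
  obtain ⟨v, hv⟩ := LinearMap.BilinForm.exists_orthogonal_basis
    (B := b) ⟨fun x y => by simpa using hbsymm x y⟩
  have hne : ∀ i, b (v i) (v i) ≠ 0 := fun i =>
    hv.not_isOrtho_basis_self_of_separatingLeft hbnd.1 i
  choose z hz using fun i => IsAlgClosed.exists_eq_mul_self (b (v i) (v i))
  have hz0 : ∀ i, z i ≠ 0 := fun i h => hne i (by rw [hz i, h, zero_mul])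
  let ε : ι ≃ Fin (finrank F V) := Fintype.equivFinOfCardEq hcard
  refine ⟨fun i => (z (ε i))⁻¹ • v (ε i), fun i j => ?_⟩
  split_ifs with h
  · subst h
    have := hz0 (ε i)
    simp only [map_smul, LinearMap.smul_apply, smul_eq_mul, hz]
    field_simp
  · have : b (v (ε i)) (v (ε j)) = 0 := hv (fun h' => h (ε.injective h'))
    simp [this]

/-- A nondegenerate symmetric form has a basis whose Gram matrix has the support of the permutation
matrix of any prescribed involution `σ`. From an orthonormal family `f` and `I² = -1`, take `f i` at
the fixed points of `σ` and `f i + I f (σ i)` elsewhere. -/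
theorem exists_paired_basis {F V ι : Type*} [Field F] [IsAlgClosed F] [AddCommGroup V]
    [Module F V] [FiniteDimensional F V] [Fintype ι] [DecidableEq ι] (hchar : (2 : F) ≠ 0)
    (b : LinearMap.BilinForm F V) (hbnd : b.Nondegenerate) (hbsymm : ∀ u v : V, b u v = b v u)
    (hcard : Fintype.card ι = finrank F V) (σ : ι → ι) (hσ : ∀ i, σ (σ i) = i) :
    ∃ e : Basis ι F V, ∀ i j, b (e i) (e j) = 0 ↔ j ≠ σ i := by
  obtain ⟨f, hf⟩ := exists_orthonormal_family hchar b hbnd hbsymm hcard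
  obtain ⟨I, hI⟩ := IsAlgClosed.exists_eq_mul_self (-1 : F)
  have hI0 : I ≠ 0 := by
    rintro rfl
    simp at hI
  -- On an orbit `{i, σ i}` of size two, `b (e i) (e i) = 1 + I² = 0` and `b (e i) (e (σ i)) = 2 I`.
  let e : ι → V := fun i => if σ i = i then f i else f i + I • f (σ i)
  have he : ∀ i j, b (e i) (e j) = 0 ↔ j ≠ σ i := by
    intro i j
    have hinj : ∀ k l, σ k = σ l ↔ k = l :=
      fun k l => ⟨fun h => by rw [← hσ k, h, hσ], fun h => h ▸ rfl⟩
    have hswap : i = σ j ↔ j = σ i :=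
      ⟨fun h => by rw [h, hσ], fun h => by rw [h, hσ]⟩
    by_cases hi : σ i = i <;> by_cases hj : σ j = j
    · simp [e, hi, hj, hf, eq_comm]
    · have hij : i ≠ j := fun h => hj (h ▸ hi)
      have hij' : j ≠ σ i := by rw [hi]; exact hij.symm
      simp [e, hi, hj, hf, hij, hswap, hij.symm]
    · have hij : i ≠ j := fun h => hi (h.symm ▸ hj)
      have hij' : j ≠ σ i := fun h => hij (by rw [hswap.2 h, hj])
      simp [e, hi, hj, hf, hij, hij', hij'.symm]
    · by_cases h1 : i = j
      · subst h1
        simp [e, hi, hf, Ne.symm hi, ← hI]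
      · by_cases h2 : j = σ i
        · subst h2
          have : I + I ≠ 0 := by rw [← two_mul]; exact mul_ne_zero hchar hI0
          simp [e, hσ, hf, h1, hi, this]
        · simp [e, hf, h1, h2, hi, hj, hswap, hinj, Ne.symm h2]
  -- Pairing a linear relation with `e (σ i)` isolates the coefficient of `e i`.
  have hli : LinearIndependent F e := by
    rw [Fintype.linearIndependent_iff]
    intro c hc i
    have h := congrArg (fun x => b x (e (σ i))) hc
    simp only [map_sum, map_smul, LinearMap.sum_apply, LinearMap.smul_apply, smul_eq_mul,
      map_zero, LinearMap.zero_apply] at h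
    rw [Finset.sum_eq_single i] at h
    · exact (mul_eq_zero.1 h).resolve_right fun h0 => (he _ _).1 h0 rfl
    · intro k _ hk
      rw [(he k (σ i)).2 fun h' => hk (by rw [← hσ k, ← h', hσ]), mul_zero]
    · simp
  refine ⟨Basis.mk hli (hli.span_eq_top_of_card_eq_finrank' hcard).ge, fun i j => ?_⟩
  simpa using he i j

/-- A product of basis vectors is homogeneous, of degree the product of the degrees `d` of the
factors. When the factors are distinct, exactly one basis vector is omitted, and only its partner
under `σ` can occur in the product. -/
theorem cross_mem_span {F V ι G : Type*} [Field F] [AddCommGroup V]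
    [Module F V] [Fintype ι] [DecidableEq ι] [CommGroup G] {r : ℕ}
    (b : LinearMap.BilinForm F V)
    (X : MultilinearMap F (fun _ : Fin r => V) V)
    (halt : ∀ (v : Fin r → V) (i j : Fin r), i ≠ j → v i = v j → X v = 0)
    (hX : ∀ v : Fin r → V, ∀ i : Fin r, b (X v) (v i) = 0)
    (hcard : Fintype.card ι = r + 1) (σ : ι → ι) (hσ : ∀ i, σ (σ i) = i)
    (e : Basis ι F V) (he : ∀ i j, b (e i) (e j) = 0 ↔ j ≠ σ i)
    (d : ι → G) (hd : ∀ i, d (σ i) = (d i)⁻¹ * ∏ k, d k) (s : Fin r → ι) :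
    X (fun i => e (s i)) ∈ Submodule.span F (e '' {k | d k = ∏ i, d (s i)}) := by
  by_cases hs : Function.Injective s
  swap
  · simp only [Function.Injective, not_forall] at hs
    obtain ⟨i, j, hij, hne⟩ := hs
    rw [halt _ i j hne (by rw [hij])]
    exact zero_mem _
  rw [← e.sum_repr (X fun i => e (s i))]
  refine Submodule.sum_mem _ fun k _ => ?_
  by_cases hk : σ k ∈ Set.range s
  -- If `e (σ k)` is a factor, the product is orthogonal to it, so its `k`-th coordinate vanishes.
  · obtain ⟨i, hi⟩ := hk
    have h := hX (fun i => e (s i)) i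
    rw [← e.sum_repr (X fun i => e (s i))] at h
    simp only [map_sum, map_smul, LinearMap.sum_apply, LinearMap.smul_apply, smul_eq_mul] at h
    rw [Finset.sum_eq_single k] at h
    · rw [(mul_eq_zero.1 h).resolve_right fun h0 => (he _ _).1 h0 hi, zero_smul]
      exact zero_mem _
    · intro l _ hl
      rw [(he l (s i)).2 fun h' => hl (by rw [← hσ l, ← h', hi, hσ]), mul_zero]
    · simp
  -- Otherwise `e (σ k)` is the omitted vector, and `d k` is the product of the other degrees.
  · refine Submodule.smul_mem _ _ (Submodule.subset_span ⟨k, ?_, rfl⟩)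
    have himg : Finset.univ.image s = Finset.univ.erase (σ k) := by
      refine Finset.eq_of_subset_of_card_le (fun x hx => ?_) ?_
      · obtain ⟨i, -, rfl⟩ := Finset.mem_image.1 hx
        exact Finset.mem_erase.2 ⟨fun h => hk ⟨i, h⟩, Finset.mem_univ _⟩
      · rw [Finset.card_image_of_injective _ hs, Finset.card_erase_of_mem (Finset.mem_univ _)]
        simp [hcard]
    have hprod : ∏ i, d (s i) = ∏ l ∈ Finset.univ.erase (σ k), d l := by
      rw [← himg, Finset.prod_image fun x _ y _ h => hs h]
    change d k = _
    have := hd (σ k)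
    rw [hσ] at this
    rw [this, hprod, ← Finset.mul_prod_erase _ d (Finset.mem_univ (σ k)), inv_mul_cancel_left]

theorem isInternal_span_fibers {F V ι G : Type*} [Field F] [AddCommGroup V]
    [Module F V] [DecidableEq G] (e : Basis ι F V) (d : ι → G) :
    DirectSum.IsInternal fun g => Submodule.span F (e '' {k | d k = g}) := by
  rw [DirectSum.isInternal_submodule_iff_iSupIndep_and_iSup_eq_top]
  constructor
  · intro g
    simp only [← Submodule.span_iUnion, ← Set.image_iUnion]
    refine e.linearIndependent.disjoint_span_image (Set.disjoint_left.2 ?_)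
    intro k hk hk'
    simp only [Set.mem_iUnion, Set.mem_ofPred_eq] at hk hk'
    obtain ⟨g', hne, h⟩ := hk'
    exact hne (h ▸ hk)
  · rw [← Submodule.span_iUnion, ← Set.image_iUnion, eq_top_iff, ← e.span_eq]
    refine Submodule.span_mono ?_
    rintro _ ⟨k, rfl⟩
    exact ⟨k, Set.mem_iUnion.2 ⟨d k, rfl⟩, rfl⟩

/-- If `X` respects degrees on basis vectors, it does so on all homogeneous vectors. -/
theorem cross_graded {F V ι G : Type*} [Field F] [AddCommGroup V]
    [Module F V] [Fintype ι] [CommGroup G] {r : ℕ}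
    (X : MultilinearMap F (fun _ : Fin r => V) V)
    (e : Basis ι F V) (d : ι → G)
    (h : ∀ s : Fin r → ι,
      X (fun i => e (s i)) ∈ Submodule.span F (e '' {k | d k = ∏ i, d (s i)}))
    (g : Fin r → G) (v : Fin r → V)
    (hv : ∀ i, v i ∈ Submodule.span F (e '' {k | d k = g i})) :
    X v ∈ Submodule.span F (e '' {k | d k = ∏ i, g i}) := by
  classical
  have hv' : v = fun i => ∑ k, e.repr (v i) k • e k := funext fun i => (e.sum_repr _).symm
  rw [hv', MultilinearMap.map_sum]
  refine Submodule.sum_mem _ fun s _ => ?_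
  rw [MultilinearMap.map_smul_univ X (fun i => e.repr (v i) (s i)) (fun i => e (s i))]
  by_cases hs : ∀ i, d (s i) = g i
  · simp only [← hs]
    exact Submodule.smul_mem _ _ (h s)
  · push Not at hs
    obtain ⟨i, hi⟩ := hs
    have h0 : e.repr (v i) (s i) = 0 := by
      by_contra hne
      exact hi (e.mem_span_image.1 (hv i) (Finsupp.mem_support_iff.2 hne))
    rw [Finset.prod_eq_zero (Finset.mem_univ i) h0, zero_smul]
    exact zero_mem _

/-- given `δ : G → ℕ` with finite support, `Σ δ(g) = n` and
`δ(g) = δ(g⁻¹h)` for all `g` (with `h = ∏_g g^δ(g)`), there exists a `G`-grading of the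
alternating `(n-1)`-fold cross product `(V, X)` with `dim V_g = δ(g)` for all `g`. -/
theorem stmt17 (F V : Type*) [Field F] [IsAlgClosed F] [AddCommGroup V] [Module F V]
    [FiniteDimensional F V]
    (hchar : (2 : F) ≠ 0)
    (n : ℕ) (hn : 3 ≤ n) (hdim : finrank F V = n)
    (b : LinearMap.BilinForm F V)
    (hbnd : b.Nondegenerate) (hbsymm : ∀ u v : V, b u v = b v u)
    (X : MultilinearMap F (fun _ : Fin (n - 1) => V) V)
    (halt : ∀ (v : Fin (n - 1) → V) (i j : Fin (n - 1)), i ≠ j → v i = v j → X v = 0)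
    (hX : IsCrossProduct b X)
    (G : Type*) [CommGroup G] [DecidableEq G]
    (δ : G → ℕ) (hδfin : (Function.support δ).Finite)
    (hδsum : ∑ᶠ g : G, δ g = n)
    (hδsymm : ∀ g : G, δ g = δ (g⁻¹ * ∏ᶠ g' : G, g' ^ (δ g'))) :
    ∃ 𝒱 : G → Submodule F V,
      DirectSum.IsInternal 𝒱 ∧
      (∀ (g : Fin (n - 1) → G) (v : Fin (n - 1) → V),
        (∀ i, v i ∈ 𝒱 (g i)) → X v ∈ 𝒱 (∏ i, g i)) ∧
      (∀ g : G, finrank F ↥(𝒱 g) = δ g) := by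
  let S : Finset G := hδfin.toFinset
  -- The index set: pairs `(g, k)` with `k < δ g`, of degree `g`.
  let T : Finset (Σ _ : G, ℕ) := S.sigma fun g => Finset.range (δ g)
  have hT : ∀ p : Σ _ : G, ℕ, p ∈ T ↔ p.2 < δ p.1 := by
    intro p
    simp only [T, S, Finset.mem_sigma, Set.Finite.mem_toFinset, Function.mem_support,
      Finset.mem_range]
    exact ⟨fun h => h.2, fun h => ⟨by omega, h⟩⟩
  let d : T → G := fun p => p.1.1
  set h : G := ∏ᶠ g' : G, g' ^ (δ g') with hh
  have hprod : ∏ k, d k = h := by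
    rw [hh, finprod_eq_prod_of_mulSupport_subset (s := S) _ fun g hg => by
      simp only [S, Set.Finite.coe_toFinset, Function.mem_support]
      rintro h0
      exact hg (by simp [h0])]
    rw [Finset.prod_coe_sort T (fun p => p.1), Finset.prod_sigma]
    simp
  have hcard : Fintype.card T = n := by
    rw [← hδsum, finsum_eq_sum_of_support_subset (s := S) _ (by simp [S]), Fintype.card_coe,
      Finset.card_sigma]
    simp
  let σ : T → T := fun p => ⟨⟨p.1.1⁻¹ * h, p.1.2⟩, (hT _).2 (by
    rw [← hδsymm]
    exact (hT _).1 p.2)⟩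
  have hσ : ∀ i, σ (σ i) = i := by
    rintro ⟨⟨g, k⟩, hp⟩
    simp [σ]
  obtain ⟨e, he⟩ := exists_paired_basis hchar b hbnd hbsymm (hcard.trans hdim.symm) σ hσ
  refine ⟨fun g => Submodule.span F (e '' {k | d k = g}), isInternal_span_fibers e d,
    cross_graded X e d fun s =>
      cross_mem_span b X halt hX.1 (by omega) σ hσ e he d (fun i => by rw [hprod]) s, fun g => ?_⟩
  have hli : LinearIndependent F (fun k : {k : T | d k = g} => e k) :=
    e.linearIndependent.comp _ Subtype.val_injective
  change finrank F (Submodule.span F (e '' {k | d k = g})) = δ g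
  rw [Set.image_eq_range, finrank_span_eq_card hli]
  let ε : {k : T | d k = g} ≃ Fin (δ g) :=
    { toFun := fun k => ⟨k.1.1.2, by
        have := (hT _).1 k.1.2
        rwa [show k.1.1.1 = g from k.2] at this⟩
      invFun := fun k => ⟨⟨⟨g, k⟩, (hT _).2 k.2⟩, rfl⟩
      left_inv := by
        rintro ⟨⟨⟨g', k⟩, hp⟩, hg⟩
        obtain rfl : g' = g := hg
        rfl
      right_inv := fun k => rfl }
  rw [Fintype.card_congr ε, Fintype.card_fin]
end

section
/- Let q ≥ 2 and let U be the abelian group defined (written additively) as the quotient of the free abelian group ℤ^{2q} on generators y₁, z₁, …, y_q, z_q by the subgroup generated by the elements (y₁ + z₁) − (y_j + z_j) for 2 ≤ j ≤ q together with (y₁ + z₁) − ((y₁ + z₁) + (y₂ + z₂) + ⋯ + (y_q + z_q)). Then U is isomorphic to ℤ^q × ℤ/(q−1)ℤ. -/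
/-!
Write `s_j = y_j + z_j`. The homomorphism `hom18` sending `y_j ↦ (e_j, 0)` and `z_j ↦ (-e_j, 1)`
is onto `ℤ^q × ℤ/(q-1)`, and it sends every `s_j` to `(0, 1)`, so it kills the relations. Conversely
an element of its kernel has the form `∑ c_j s_j` with `q - 1 ∣ ∑ c_j`. Modulo the relations all
`s_j` agree with `s_1` and `(q - 1) s_1 = 0`, so such an element is a relation. Hence the kernel is
exactly `rels18`, and the first isomorphism theorem applies.
-/

/-- The free abelian group on the `2q` generators `y₁, z₁, …, y_q, z_q`. -/
abbrev FreeAb18 (q : ℕ) : Type := (Fin q ⊕ Fin q) →₀ ℤ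

/-- The generator `y_j`. -/
noncomputable def gen18y (q : ℕ) (j : Fin q) : FreeAb18 q := Finsupp.single (Sum.inl j) 1

/-- The generator `z_j`. -/
noncomputable def gen18z (q : ℕ) (j : Fin q) : FreeAb18 q := Finsupp.single (Sum.inr j) 1

/-- The subgroup of relations: it is generated by the elements
`(y₁ + z₁) − (y_j + z_j)` for `2 ≤ j ≤ q`, together with
`(y₁ + z₁) − ((y₁ + z₁) + (y₂ + z₂) + ⋯ + (y_q + z_q))`. -/
noncomputable def rels18 (q : ℕ) (hq : 0 < q) : AddSubgroup (FreeAb18 q) :=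
  AddSubgroup.closure
    ({a | ∃ j : Fin q, j ≠ ⟨0, hq⟩ ∧
        a = (gen18y q ⟨0, hq⟩ + gen18z q ⟨0, hq⟩) - (gen18y q j + gen18z q j)} ∪
      {(gen18y q ⟨0, hq⟩ + gen18z q ⟨0, hq⟩) - ∑ j : Fin q, (gen18y q j + gen18z q j)})

/-- The homomorphism `y_j ↦ (e_j, 0)`, `z_j ↦ (-e_j, 1)`, written in coordinates. -/
def hom18 (q : ℕ) : FreeAb18 q →+ (Fin q → ℤ) × ZMod (q - 1) where
  toFun a := (fun j => a (Sum.inl j) - a (Sum.inr j), ((∑ j, a (Sum.inr j) : ℤ) : ZMod (q - 1)))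
  map_zero' := by ext <;> simp
  map_add' a b := by
    ext
    · simp; ring
    · simp [Finset.sum_add_distrib]

theorem hom18_gen_add (q : ℕ) (j : Fin q) : hom18 q (gen18y q j + gen18z q j) = (0, 1) := by
  ext i
  · by_cases h : j = i <;> simp [hom18, gen18y, gen18z, Finsupp.single_apply, h]
  · simp [hom18, gen18y, gen18z, Finsupp.single_apply]

theorem hom18_surjective (q : ℕ) (hq : 0 < q) : Function.Surjective (hom18 q) := by
  rintro ⟨v, t⟩
  obtain ⟨m, rfl⟩ := ZMod.intCast_surjective t
  -- The preimage is `∑ v_j y_j + m s_1`.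
  refine ⟨Finsupp.equivFunOnFinite.symm (Sum.elim v 0)
    + m • (gen18y q ⟨0, hq⟩ + gen18z q ⟨0, hq⟩), ?_⟩
  rw [map_add, map_zsmul, hom18_gen_add]
  ext <;> simp [hom18]

theorem rels18_le_ker (q : ℕ) (hq : 0 < q) : rels18 q hq ≤ (hom18 q).ker := by
  refine (AddSubgroup.closure_le _).2 ?_
  rintro a (⟨j, -, rfl⟩ | rfl)
  · simp only [SetLike.mem_coe, AddMonoidHom.mem_ker]
    rw [map_sub, hom18_gen_add, hom18_gen_add, sub_self]
  · simp only [SetLike.mem_coe, AddMonoidHom.mem_ker]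
    rw [map_sub, map_sum]
    simp only [hom18_gen_add]
    -- The second coordinate is `1 - q`, which vanishes in `ℤ/(q-1)`.
    have h : ((q - 1 : ℕ) : ZMod (q - 1)) = 0 := ZMod.natCast_self _
    rw [Nat.cast_sub hq, Nat.cast_one] at h
    ext
    · simp
    · simp only [Prod.snd_sub, Finset.sum_const, Finset.card_univ, Fintype.card_fin,
        nsmul_eq_mul, Prod.snd_mul, Prod.snd_natCast, mul_one, Prod.snd_zero]
      linear_combination -h

theorem ker_le_rels18 (q : ℕ) (hq : 0 < q) : (hom18 q).ker ≤ rels18 q hq := by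
  intro a ha
  set s : Fin q → FreeAb18 q := fun j => gen18y q j + gen18z q j with hs
  have hsub : ∀ j, s ⟨0, hq⟩ - s j ∈ rels18 q hq := by
    intro j
    by_cases h : j = ⟨0, hq⟩
    · rw [h, sub_self]; exact zero_mem _
    · exact AddSubgroup.subset_closure (Or.inl ⟨j, h, rfl⟩)
  have htot : s ⟨0, hq⟩ - ∑ j, s j ∈ rels18 q hq := AddSubgroup.subset_closure (Or.inr rfl)
  have htors : ((q - 1 : ℕ) : ℤ) • s ⟨0, hq⟩ ∈ rels18 q hq := by
    have h := (rels18 q hq).sub_mem (sum_mem fun j (_ : j ∈ Finset.univ) => hsub j) htot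
    have e : ∑ j, (s ⟨0, hq⟩ - s j) - (s ⟨0, hq⟩ - ∑ j, s j)
        = ((q - 1 : ℕ) : ℤ) • s ⟨0, hq⟩ := by
      rw [Finset.sum_sub_distrib, Nat.cast_sub hq, sub_smul]
      simp
    rwa [e] at h
  rw [AddMonoidHom.mem_ker, Prod.ext_iff] at ha
  obtain ⟨h1, h2⟩ := ha
  have h1' : ∀ j, a (Sum.inl j) = a (Sum.inr j) := fun j => sub_eq_zero.1 (congrFun h1 j)
  obtain ⟨k, hk⟩ := (ZMod.intCast_zmod_eq_zero_iff_dvd _ (q - 1)).1 h2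
  have hexp : a = ∑ j, a (Sum.inr j) • s j := by
    ext i
    rcases i with i | i <;>
      simp [hs, gen18y, gen18z, Finsupp.finsetSum_apply, Finsupp.single_apply, h1']
  have hdec : a = k • ((q - 1 : ℕ) : ℤ) • s ⟨0, hq⟩
      - ∑ j, a (Sum.inr j) • (s ⟨0, hq⟩ - s j) := by
    simp only [smul_sub]
    rw [Finset.sum_sub_distrib, ← hexp, ← Finset.sum_smul, hk, smul_smul, mul_comm k]
    abel
  rw [hdec]
  exact sub_mem (zsmul_mem htors _) (sum_mem fun j _ => zsmul_mem (hsub j) _)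

/-- the abelian group with generators `y₁, z₁, …, y_q, z_q` and relations
`y₁z₁ = y₂z₂ = ⋯ = y_qz_q = y₁z₁y₂z₂⋯y_qz_q` is isomorphic to `ℤ^q × ℤ/(q−1)ℤ`. -/
theorem stmt18 (q : ℕ) (hq : 2 ≤ q) :
    Nonempty ((FreeAb18 q ⧸ rels18 q (by omega)) ≃+ ((Fin q → ℤ) × ZMod (q - 1))) := by
  have hq0 : 0 < q := by omega
  exact ⟨(QuotientAddGroup.quotientAddEquivOfEq
    (le_antisymm (rels18_le_ker q hq0) (ker_le_rels18 q hq0))).trans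
    (QuotientAddGroup.quotientKerEquivOfSurjective (hom18 q) (hom18_surjective q hq0))⟩
end

section
/- Let p ≥ 2 and q ≥ 0 with n := p + 2q ≥ 3, and let U be the abelian group defined (written additively) as the quotient of the free abelian group ℤ^{p+2q} on generators x₁, …, x_p, y₁, z₁, …, y_q, z_q by the subgroup generated by the elements 2x₁ − 2x_i for 2 ≤ i ≤ p, the elements 2x₁ − (y_j + z_j) for 1 ≤ j ≤ q, and the element 2x₁ − (x₁ + ⋯ + x_p + (y₁ + z₁) + ⋯ + (y_q + z_q)). Then U is isomorphic to ℤ^q × ℤ/(2n−4)ℤ × (ℤ/2ℤ)^{p−2}. -/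
/-!
Write `p = m + 2`, `a = x₁` and `eᵢ = xᵢ - a`. The relations say that each `eᵢ` is killed by `2`,
that `z_j = 2a - y_j`, and that `(n - 2) a + ∑ eᵢ = 0`. The last relation eliminates `e_p`, and
then `2 e_p = 0` becomes `(2n - 4) a = 0`. Hence the group is the direct sum of the cyclic groups
generated by the `y_j`
(infinite order), `a` (order `2n - 4`) and `e₂, …, e_{p-1}` (order `2`). The proof makes this
explicit with the homomorphisms `toModel19` and `fromModel19`, which are checked to be mutually
inverse on generators.
-/

/-- The free abelian group on the `p + 2q` generators
`x₁, …, x_p, y₁, z₁, …, y_q, z_q`. -/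
abbrev FreeAb19 (p q : ℕ) : Type := (Fin p ⊕ (Fin q ⊕ Fin q)) →₀ ℤ

/-- The generator `x_i`. -/
noncomputable def gen19x (p q : ℕ) (i : Fin p) : FreeAb19 p q :=
  Finsupp.single (Sum.inl i) 1

/-- The generator `y_j`. -/
noncomputable def gen19y (p q : ℕ) (j : Fin q) : FreeAb19 p q :=
  Finsupp.single (Sum.inr (Sum.inl j)) 1

/-- The generator `z_j`. -/
noncomputable def gen19z (p q : ℕ) (j : Fin q) : FreeAb19 p q :=
  Finsupp.single (Sum.inr (Sum.inr j)) 1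

/-- The subgroup of relations: it is generated by the elements `2x₁ − 2x_i` for
`2 ≤ i ≤ p`, the elements `2x₁ − (y_j + z_j)` for `1 ≤ j ≤ q`, and the element
`2x₁ − (x₁ + ⋯ + x_p + (y₁ + z₁) + ⋯ + (y_q + z_q))`. -/
noncomputable def rels19 (p q : ℕ) (hp : 0 < p) : AddSubgroup (FreeAb19 p q) :=
  AddSubgroup.closure
    ({a | ∃ i : Fin p, i ≠ ⟨0, hp⟩ ∧
        a = 2 • gen19x p q ⟨0, hp⟩ - 2 • gen19x p q i} ∪
      {a | ∃ j : Fin q,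
        a = 2 • gen19x p q ⟨0, hp⟩ - (gen19y p q j + gen19z p q j)} ∪
      {2 • gen19x p q ⟨0, hp⟩ -
        (∑ i : Fin p, gen19x p q i + ∑ j : Fin q, (gen19y p q j + gen19z p q j))})

/-- The group `ℤ^q × ℤ/N × (ℤ/2)^m`; it is used with `N = 2 (m + 2q)`. -/
abbrev Model19 (m q N : ℕ) : Type := (Fin q → ℤ) × ZMod N × (Fin m → ZMod 2)

/-- The images of the generators `xᵢ`: the first goes to `a`, the last to
`a - (n - 2) a + ∑ eᵢ`, where `n - 2 = m + 2q`, and the ones in between to `a + eᵢ`. -/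
def modelX19 (m q N : ℕ) : Fin (m + 2) → Model19 m q N :=
  Fin.cases (0, 1, 0)
    (Fin.lastCases (0, 1 - ((m + 2 * q : ℕ) : ZMod N), fun _ => 1)
      (fun i => (0, 1, Pi.single i 1)))

/-- The images of all generators. -/
def modelGen19 (m q N : ℕ) : Fin (m + 2) ⊕ (Fin q ⊕ Fin q) → Model19 m q N :=
  Sum.elim (modelX19 m q N)
    (Sum.elim (fun j => (Pi.single j 1, 0, 0)) (fun j => (-Pi.single j 1, 2, 0)))

/-- The homomorphism from the free abelian group determined by `modelGen19`. -/
noncomputable def freeToModel19 (m q N : ℕ) : FreeAb19 (m + 2) q →+ Model19 m q N :=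
  (Finsupp.linearCombination ℤ (modelGen19 m q N)).toAddMonoidHom

section forward

variable (m q N : ℕ)

lemma freeToModel19_single (s : Fin (m + 2) ⊕ (Fin q ⊕ Fin q)) :
    freeToModel19 m q N (Finsupp.single s 1) = modelGen19 m q N s := by
  simp [freeToModel19]

lemma freeToModel19_x (i : Fin (m + 2)) :
    freeToModel19 m q N (gen19x (m + 2) q i) = modelX19 m q N i :=
  freeToModel19_single m q N _

lemma freeToModel19_y (j : Fin q) :
    freeToModel19 m q N (gen19y (m + 2) q j) = (Pi.single j 1, 0, 0) :=
  freeToModel19_single m q N _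

lemma freeToModel19_z (j : Fin q) :
    freeToModel19 m q N (gen19z (m + 2) q j) = (-Pi.single j 1, 2, 0) :=
  freeToModel19_single m q N _

lemma modelX19_zero : modelX19 m q N 0 = (0, 1, 0) := rfl

lemma modelX19_mid (i : Fin m) :
    modelX19 m q N i.castSucc.succ = (0, 1, Pi.single i 1) := by
  simp [modelX19]

lemma modelX19_last :
    modelX19 m q N (Fin.last m).succ = (0, 1 - ((m + 2 * q : ℕ) : ZMod N), fun _ => 1) := by
  simp only [modelX19, Fin.cases_succ, Fin.lastCases_last]

lemma two_nsmul_modelX19 (hN : N = 2 * (m + 2 * q)) (i : Fin (m + 2)) :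
    2 • modelX19 m q N i = (0, 2, 0) := by
  have h2 : (2 : ZMod 2) = 0 := rfl
  have h0 : (2 : ZMod N) * ((m + 2 * q : ℕ) : ZMod N) = 0 := by
    have h := (ZMod.natCast_eq_zero_iff (2 * (m + 2 * q)) N).2 (dvd_of_eq hN)
    rwa [Nat.cast_mul, Nat.cast_ofNat] at h
  induction i using Fin.cases with
  | zero => simp [modelX19_zero]
  | succ i =>
    induction i using Fin.lastCases with
    | last =>
      rw [modelX19_last]
      refine Prod.ext (by simp) (Prod.ext ?_ ?_)
      · simp only [Prod.smul_mk, nsmul_eq_mul, Nat.cast_ofNat]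
        linear_combination -h0
      · funext j
        simp [h2]
    | cast i =>
      rw [modelX19_mid]
      refine Prod.ext (by simp) (Prod.ext (by simp) ?_)
      funext j
      simp [h2]

lemma sum_modelX19 : ∑ i, modelX19 m q N i = (0, 2 - ((2 * q : ℕ) : ZMod N), 0) := by
  rw [Fin.sum_univ_succ, Fin.sum_univ_castSucc, modelX19_last, modelX19_zero]
  simp only [modelX19_mid]
  refine Prod.ext ?_ (Prod.ext ?_ ?_)
  · simp [Prod.fst_sum]
  · simp [Prod.fst_sum, Prod.snd_sum]
    ring
  · funext j
    have h : (1 : ZMod 2) + 1 = 0 := rfl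
    simp [Prod.snd_sum, Finset.sum_apply, Pi.single_apply, h]

/-- `freeToModel19` kills the relations, so it descends to the quotient. -/
lemma rels19_le_ker (hN : N = 2 * (m + 2 * q)) (h : 0 < m + 2) :
    rels19 (m + 2) q h ≤ (freeToModel19 m q N).ker := by
  rw [rels19, AddSubgroup.closure_le]
  rintro a ((⟨i, -, rfl⟩ | ⟨j, rfl⟩) | rfl) <;>
    simp only [SetLike.mem_coe, AddMonoidHom.mem_ker, map_sub, map_nsmul, map_add, map_sum,
      freeToModel19_x, freeToModel19_y, freeToModel19_z, two_nsmul_modelX19 m q N hN,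
      sum_modelX19]
  · simp
  · simp
  · refine Prod.ext ?_ (Prod.ext ?_ ?_)
    · simp
    · simp
      ring
    · simp

/-- The homomorphism from the presented group to the model. -/
noncomputable def toModel19 (hN : N = 2 * (m + 2 * q)) (h : 0 < m + 2) :
    (FreeAb19 (m + 2) q ⧸ rels19 (m + 2) q h) →+ Model19 m q N :=
  QuotientAddGroup.lift _ (freeToModel19 m q N) (rels19_le_ker m q N hN h)

end forward

section backward

/-- An additive homomorphism out of `ℤ^q × ℤ/N × (ℤ/2)^m` given by the images `y j`, `a`, `e i`
of the standard generators, subject to the order conditions. -/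
noncomputable def fromModel19 {m q N : ℕ} {A : Type*} [AddCommGroup A] (y : Fin q → A) (a : A)
    (e : Fin m → A) (ha : N • a = 0) (he : ∀ i, 2 • e i = 0) : Model19 m q N →+ A :=
  (∑ j, (zmultiplesHom A (y j)).comp (Pi.evalAddMonoidHom _ j)).coprod
    ((ZMod.lift N ⟨zmultiplesHom A a, by simpa using ha⟩).coprod
      (∑ i, (ZMod.lift 2 ⟨zmultiplesHom A (e i), by simpa [ofNat_zsmul] using he i⟩).comp
        (Pi.evalAddMonoidHom _ i)))

variable {m q N : ℕ} {A : Type*} [AddCommGroup A] (y : Fin q → A) (a : A)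
    (e : Fin m → A) (ha : N • a = 0) (he : ∀ i, 2 • e i = 0)

lemma fromModel19_y (j : Fin q) :
    fromModel19 y a e ha he (Pi.single j 1, 0, 0) = y j := by
  simp [fromModel19, AddMonoidHom.finsetSum_apply, Pi.single_apply, ite_smul]

lemma fromModel19_a (k : ℤ) : fromModel19 y a e ha he (0, (k : ZMod N), 0) = k • a := by
  simp [fromModel19, AddMonoidHom.finsetSum_apply]

lemma zmod_two_lift_one (b : A) (hb) :
    ZMod.lift 2 ⟨zmultiplesHom A b, hb⟩ 1 = b := by
  simpa using ZMod.lift_coe 2 ⟨zmultiplesHom A b, hb⟩ 1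

lemma fromModel19_e (i : Fin m) :
    fromModel19 y a e ha he (0, 0, Pi.single i 1) = e i := by
  simp only [fromModel19, AddMonoidHom.coprod_apply, AddMonoidHom.finsetSum_apply,
    AddMonoidHom.comp_apply, Pi.evalAddMonoidHom_apply, map_zero, zero_add]
  rw [Finset.sum_eq_single i]
  · rw [Pi.single_eq_same, zmod_two_lift_one]
  · intro b _ hb
    rw [Pi.single_eq_of_ne hb, map_zero]
  · simp

/-- Homomorphisms out of the model agree when they agree on the standard generators. -/
lemma model19_ext {B : Type*} [AddCommGroup B] {f g : Model19 m q N →+ B}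
    (hy : ∀ j, f (Pi.single j 1, 0, 0) = g (Pi.single j 1, 0, 0))
    (h1 : f (0, 1, 0) = g (0, 1, 0))
    (he : ∀ i, f (0, 0, Pi.single i 1) = g (0, 0, Pi.single i 1)) : f = g := by
  have key : ∀ {n : ℕ} {u v : ZMod n →+ B}, u 1 = v 1 → u = v := by
    intro n u v h
    ext x
    obtain ⟨k, rfl⟩ := ZMod.intCast_surjective x
    rw [← zsmul_one, map_zsmul, map_zsmul, h]
  have H1 : f.comp (AddMonoidHom.inl _ _) = g.comp (AddMonoidHom.inl _ _) := by
    refine AddMonoidHom.functions_ext' _ _ _ fun j => AddMonoidHom.ext_int ?_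
    exact hy j
  have H2 : (f.comp (AddMonoidHom.inr _ _)).comp (AddMonoidHom.inl _ _)
      = (g.comp (AddMonoidHom.inr _ _)).comp (AddMonoidHom.inl _ _) := by
    refine key ?_
    simpa using h1
  have H3 : (f.comp (AddMonoidHom.inr _ _)).comp (AddMonoidHom.inr _ _)
      = (g.comp (AddMonoidHom.inr _ _)).comp (AddMonoidHom.inr _ _) := by
    refine AddMonoidHom.functions_ext' _ _ _ fun j => key ?_
    simpa using he j
  ext ⟨u, v, w⟩
  have hs : ((u, v, w) : Model19 m q N) = (u, 0, 0) + ((0, v, 0) + (0, 0, w)) := by simp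
  rw [hs, map_add, map_add, map_add, map_add]
  exact congrArg₂ _ (DFunLike.congr_fun H1 u)
    (congrArg₂ _ (DFunLike.congr_fun H2 v) (DFunLike.congr_fun H3 w))

end backward

/-- The isomorphism with `p = m + 2` and the modulus written without subtraction. -/
lemma presented19_equiv (m q N : ℕ) (hN : N = 2 * (m + 2 * q)) (h : 0 < m + 2) :
    Nonempty ((FreeAb19 (m + 2) q ⧸ rels19 (m + 2) q h) ≃+ Model19 m q N) := by
  let π := QuotientAddGroup.mk' (rels19 (m + 2) q h)
  obtain ⟨X, hX⟩ : ∃ X, X = fun i => π (gen19x (m + 2) q i) := ⟨_, rfl⟩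
  obtain ⟨Y, hY⟩ : ∃ Y, Y = fun j => π (gen19y (m + 2) q j) := ⟨_, rfl⟩
  obtain ⟨Z, hZ⟩ : ∃ Z, Z = fun j => π (gen19z (m + 2) q j) := ⟨_, rfl⟩
  have hπ : ∀ r ∈ rels19 (m + 2) q h, π r = 0 := fun r hr =>
    (QuotientAddGroup.eq_zero_iff r).2 hr
  have r1 : ∀ i, 2 • X i = 2 • X 0 := by
    intro i
    by_cases hi : i = 0
    · rw [hi]
    have := hπ _ (AddSubgroup.subset_closure (Or.inl (Or.inl ⟨i, hi, rfl⟩)))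
    rw [map_sub, map_nsmul, map_nsmul, sub_eq_zero] at this
    rw [hX]
    exact this.symm
  have r2 : ∀ j, Y j + Z j = 2 • X 0 := by
    intro j
    have := hπ _ (AddSubgroup.subset_closure (Or.inl (Or.inr ⟨j, rfl⟩)))
    rw [map_sub, map_nsmul, map_add, sub_eq_zero] at this
    rw [hX, hY, hZ]
    exact this.symm
  have r3 : ∑ i, X i + ∑ j, (Y j + Z j) = 2 • X 0 := by
    have := hπ _ (AddSubgroup.subset_closure (Or.inr rfl))
    simp only [map_sub, map_nsmul, map_add, map_sum, sub_eq_zero] at this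
    rw [hX, hY, hZ]
    exact this.symm
  obtain ⟨e, hedef⟩ : ∃ e : Fin m → _, e = fun i => X i.castSucc.succ - X 0 := ⟨_, rfl⟩
  have he : ∀ i, 2 • e i = 0 := by
    intro i
    simp only [hedef]
    rw [nsmul_sub, r1, sub_self]
  have hlast : X (Fin.last m).succ = X 0 - (m + 2 * q) • X 0 - ∑ i, e i := by
    have hsum : ∑ i : Fin m, X i.castSucc.succ = m • X 0 + ∑ i, e i := by
      simp [hedef, Finset.sum_sub_distrib]
    rw [Fin.sum_univ_succ, Fin.sum_univ_castSucc, hsum] at r3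
    simp only [r2, Finset.sum_const, Finset.card_univ, Fintype.card_fin] at r3
    rw [eq_sub_iff_add_eq, eq_sub_iff_add_eq, ← add_right_inj (X 0), ← two_nsmul, ← r3]
    module
  have ha : N • X 0 = 0 := by
    have h1 := r1 (Fin.last m).succ
    have h2 : 2 • ∑ i, e i = 0 := by
      rw [Finset.smul_sum]
      exact Finset.sum_eq_zero fun i _ => he i
    rw [hlast, nsmul_sub, nsmul_sub, h2, sub_zero, sub_eq_self] at h1
    rw [hN, mul_nsmul', h1]
  let F := toModel19 m q N hN h
  let G := fromModel19 Y (X 0) e ha he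
  have hFX : ∀ i, F (X i) = modelX19 m q N i := fun i => by
    rw [hX]; exact freeToModel19_x m q N i
  have hFY : ∀ i, F (Y i) = (Pi.single i 1, 0, 0) := fun i => by
    rw [hY]; exact freeToModel19_y m q N i
  have hFG : F.comp G = AddMonoidHom.id _ := by
    have g1 : G (0, 1, 0) = X 0 := by
      simpa using fromModel19_a Y (X 0) e ha he 1
    refine model19_ext (fun j => ?_) ?_ (fun i => ?_)
    · simp only [AddMonoidHom.comp_apply, AddMonoidHom.id_apply, G, fromModel19_y, hFY]
    · rw [AddMonoidHom.comp_apply, g1, hFX, modelX19_zero, AddMonoidHom.id_apply]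
    · simp only [AddMonoidHom.comp_apply, AddMonoidHom.id_apply, G, fromModel19_e]
      rw [hedef, map_sub, hFX, hFX, modelX19_zero, modelX19_mid]
      simp
  have hGx : ∀ i, G (modelX19 m q N i) = X i := by
    have ga : ∀ k : ℤ, G (0, (k : ZMod N), 0) = k • X 0 := fromModel19_a Y (X 0) e ha he
    have ge : ∀ i, G (0, 0, Pi.single i 1) = e i := fromModel19_e Y (X 0) e ha he
    intro i
    induction i using Fin.cases with
    | zero => simpa [modelX19_zero] using ga 1
    | succ i =>
      induction i using Fin.lastCases with
      | last =>
        -- Signs do not matter in `(ℤ/2)^m`, so the vector of ones is `-∑ eᵢ`.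
        have hs : modelX19 m q N (Fin.last m).succ =
            (0, ((1 - (m + 2 * q : ℕ) : ℤ) : ZMod N), 0) -
              ∑ i : Fin m, (0, 0, Pi.single i 1) := by
          rw [modelX19_last]
          refine Prod.ext ?_ (Prod.ext ?_ ?_)
          · simp [Prod.fst_sum]
          · simp [Prod.fst_sum, Prod.snd_sum]
          · funext j
            have h : (1 : ZMod 2) = -1 := rfl
            simp [Prod.snd_sum, Finset.sum_apply, Pi.single_apply, ← h]
        rw [hs, map_sub, map_sum, ga, hlast]
        simp only [ge]
        rw [sub_zsmul, one_zsmul, natCast_zsmul, sub_eq_add_neg (X 0)]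
      | cast i =>
        have hs : modelX19 m q N i.castSucc.succ =
            (0, ((1 : ℤ) : ZMod N), 0) + (0, 0, Pi.single i 1) := by
          rw [modelX19_mid]; simp
        rw [hs, map_add, ga, ge, hedef]
        simp
  have hGF : G.comp F = AddMonoidHom.id _ := by
    refine QuotientAddGroup.addMonoidHom_ext _ (Finsupp.addHom_ext' fun s =>
      AddMonoidHom.ext_int ?_)
    change G (freeToModel19 m q N (Finsupp.single s 1)) = π (Finsupp.single s 1)
    rw [freeToModel19_single]
    rcases s with i | j | j
    · exact (hGx i).trans (by rw [hX]; rfl)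
    · exact (fromModel19_y Y (X 0) e ha he j).trans (by rw [hY]; rfl)
    · have hs : modelGen19 m q N (Sum.inr (Sum.inr j)) =
          (0, ((2 : ℤ) : ZMod N), 0) - (Pi.single j 1, 0, 0) := by
        simp [modelGen19]
      have hz : π (Finsupp.single (Sum.inr (Sum.inr j)) 1) = Z j := by rw [hZ]; rfl
      rw [hs, map_sub, hz]
      refine (congrArg₂ _ (fromModel19_a Y (X 0) e ha he 2)
        (fromModel19_y Y (X 0) e ha he j)).trans ?_
      rw [sub_eq_iff_eq_add', r2]
      exact ofNat_zsmul (X 0) 2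
  exact ⟨AddMonoidHom.toAddEquiv F G hGF hFG⟩

/-- for `p ≥ 2`, `q ≥ 0` and `n = p + 2q ≥ 3`, the abelian group with
generators `x₁, …, x_p, y₁, z₁, …, y_q, z_q` and relations
`x₁² = ⋯ = x_p² = y₁z₁ = ⋯ = y_qz_q = x₁⋯x_p·y₁z₁⋯y_qz_q` is isomorphic to
`ℤ^q × ℤ/(2n−4)ℤ × (ℤ/2ℤ)^{p−2}`. -/
theorem stmt19 (p q : ℕ) (hp : 2 ≤ p) (hn : 3 ≤ p + 2 * q) :
    Nonempty ((FreeAb19 p q ⧸ rels19 p q (by omega)) ≃+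
      ((Fin q → ℤ) × ZMod (2 * (p + 2 * q) - 4) × (Fin (p - 2) → ZMod 2))) := by
  obtain ⟨m, rfl⟩ : ∃ m, p = m + 2 := ⟨p - 2, by omega⟩
  exact presented19_equiv m q _ (by omega) _
end
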